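/- arXiv:1811.02996 — 2 statements merged into one kernel-verified Lean document; each statement's English description precedes it below -/
import Mathlib

section
/- Let G be a finite Frobenius group whose Frobenius kernel K is a minimal normal subgroup of G and whose Frobenius complement H is cyclic. Then ρ(G) = |K| + 1. -/
/-!
The kernel together with the `|K|` conjugates of the complement is a partition, which gives
`ρ(G) ≤ |K| + 1` (`exists_partition`).

Conversely, let `P` be a partition and `h₀` a generator of `H`. For each `k ∈ K` some member `A k`
of `P` contains `k h₀ k⁻¹`, hence the whole conjugate `k H k⁻¹`. If `A k ∩ K = 1` for all `k`, then
`k ↦ A k` is injective, because `(k h₀ k⁻¹)(l h₀ l⁻¹)⁻¹ ∈ K`, and one more member is needed to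
cover `K`; so `|P| ≥ |K| + 1` (`card_le_of_isPartitionOf`).

It remains to see that `A ∩ K ≠ 1` is impossible for `A = A k`. As `G = K · k H k⁻¹`, this would
follow from `K ≤ A`. If `K` is abelian, `A ∩ K` is normalized by `K` and by `k H k⁻¹`, hence is
normal in `G` and equals `K` by minimality. If `K` is not abelian, it is perfect, by minimality
again, and the sets `{y ∈ K | g y g⁻¹ and g x g⁻¹ lie in the same member of P for all g ∈ G}`
define a partition of `K` invariant under conjugation and under the fixed-point-free automorphism
`σ` induced by `h₀`. Such a partition is trivial (`IsInvPart.exists_eq_top`), so `K` lies in one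
member of `P`. This replaces the appeal to Thompson's theorem that Frobenius kernels are nilpotent.

The proof of `IsInvPart.exists_eq_top` for a perfect group `Γ` rests on the following facts.
* Every `σ`-invariant subgroup has a `σ`-invariant Sylow `p`-subgroup (Lang's argument).
* If an invariant `q`-group normalizes an invariant `p`-group with `p ≠ q`, it centralizes the
  centre of the latter: average over the Frobenius group `Q⟨σ⟩` (`prod_action_eq_pow`).
* Commuting elements of different orders lie in the same part. With the previous fact and a Frattini
  argument, `p'`-elements normalizing an invariant part lie in it if its order is divisible by `p`
  (`IsInvPart.mem_of_normalizer`).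
* An invariant Sylow `q`-subgroup `S` lies in one part (`IsInvPart.exists_sylow_le`). Otherwise `S`
  is self-normalizing, the elements of order not dividing `q` generate a proper subgroup of `S`, and
  evaluating the transfer into `S` yields a nontrivial abelian quotient of `Γ`.
* Hence the part containing `S` is self-normalizing, and its conjugates cover at least half of `Γ`.
  Consequently the parts obtained for the various primes are all conjugate, so one part has order
  divisible by `|Γ|`.
-/

open Pointwise

/-- A cover of a group `G`: a finite family of proper subgroups whose union is all of `G`. -/
def IsCover {G : Type*} [Group G] (P : Finset (Subgroup G)) : Prop :=
  (∀ H ∈ P, H ≠ ⊤) ∧ ∀ g : G, ∃ H ∈ P, g ∈ H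

/-- A partition of a group `G`: a cover in which any two distinct members intersect trivially. -/
def IsPartitionOf {G : Type*} [Group G] (P : Finset (Subgroup G)) : Prop :=
  IsCover P ∧ ∀ H ∈ P, ∀ K ∈ P, H ≠ K → H ⊓ K = ⊥

/-- `σ(G)`: the minimal cardinality of a cover of `G`. -/
noncomputable def sigmaG (G : Type*) [Group G] : ℕ :=
  sInf {n | ∃ P : Finset (Subgroup G), IsCover P ∧ P.card = n}

/-- `ρ(G)`: the minimal cardinality of a partition of `G`. -/
noncomputable def rhoG (G : Type*) [Group G] : ℕ :=
  sInf {n | ∃ P : Finset (Subgroup G), IsPartitionOf P ∧ P.card = n}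

/-- A group is partitionable if it admits a partition. -/
def Partitionable (G : Type*) [Group G] : Prop :=
  ∃ P : Finset (Subgroup G), IsPartitionOf P

section

open Finset

/-- `P` is a Sylow `p`-subgroup of the subgroup `L`, all as subgroups of the ambient group: it has
the right order, and every `p`-subgroup of `L` is conjugate in `L` into `P`. -/
structure IsSyl {Γ : Type*} [Group Γ] (p : ℕ) (P L : Subgroup Γ) : Prop where
  le : P ≤ L
  card : Nat.card P = p ^ (Nat.card L).factorization p
  conj : ∀ Q ≤ L, IsPGroup p Q → ∃ l ∈ L, ∀ x ∈ Q, l * x * l⁻¹ ∈ P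

/-- `σ` has order dividing `n > 1` and its powers `σ ^ i`, `0 < i < n`, fix only the identity:
the semidirect product of `Γ` with `⟨σ⟩` is a Frobenius group (when `Γ` is nontrivial). -/
structure IsFPF {Γ : Type*} [Group Γ] (σ : MulAut Γ) (n : ℕ) : Prop where
  one_lt : 1 < n
  pow_eq : σ ^ n = 1
  fpf : ∀ i, 0 < i → i < n → ∀ x, (σ ^ i) x = x → x = 1

/-- `C` encodes a partition of `Γ` that is invariant under conjugation and under `σ`: for `x ≠ 1`,
`C x` is the part containing `x`. The value `C 1` carries no meaning beyond the closure
properties below. -/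
structure IsInvPart {Γ : Type*} [Group Γ] (σ : MulAut Γ) (C : Γ → Subgroup Γ) : Prop where
  self : ∀ x, x ∈ C x
  eq_of_mem : ∀ x y, x ≠ 1 → y ≠ 1 → y ∈ C x → C y = C x
  conj : ∀ g x y, y ∈ C x → g * y * g⁻¹ ∈ C (g * x * g⁻¹)
  map : ∀ x y, y ∈ C x → σ y ∈ C (σ x)

/-! ### Invariant Sylow subgroups and actions of Frobenius groups -/

section
variable {Γ : Type*} [Group Γ] [Finite Γ]

theorem exists_isSyl (p : ℕ) [Fact p.Prime] (L : Subgroup Γ) : ∃ P, IsSyl p P L := by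
  obtain ⟨S⟩ : Nonempty (Sylow p L) := inferInstance
  refine ⟨(S : Subgroup L).map L.subtype, ?_, ?_, ?_⟩
  · exact Subgroup.map_subtype_le _
  · rw [Subgroup.card_map_of_injective L.subtype_injective]
    exact S.card_eq_multiplicity
  · intro Q hQ hp
    have h1 : IsPGroup p (Q.subgroupOf L) := hp.comap_of_injective _ L.subtype_injective
    obtain ⟨T, hT⟩ := h1.exists_le_sylow
    obtain ⟨l, hl⟩ := MulAction.exists_smul_eq L T S
    refine ⟨l, l.2, fun x hx => ?_⟩
    have h2 : (⟨x, hQ hx⟩ : L) ∈ T := hT (by simpa [Subgroup.mem_subgroupOf] using hx)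
    have h3 : l * ⟨x, hQ hx⟩ * l⁻¹ ∈ S := by
      rw [← hl]
      exact Subgroup.mem_map.2 ⟨_, h2, by simp [MulAut.conj_apply]⟩
    exact ⟨_, h3, by simp⟩

omit [Finite Γ] in
theorem IsSyl.isPGroup {p : ℕ} [Fact p.Prime] {P L : Subgroup Γ} (h : IsSyl p P L) :
    IsPGroup p P := IsPGroup.of_card h.card

omit [Finite Γ] in
theorem IsSyl.conjugate {p : ℕ} [Fact p.Prime] {P L : Subgroup Γ} (h : IsSyl p P L) {l : Γ}
    (hl : l ∈ L) : IsSyl p (P.map (MulAut.conj l).toMonoidHom) L := by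
  refine ⟨?_, ?_, ?_⟩
  · rintro _ ⟨x, hx, rfl⟩
    exact L.mul_mem (L.mul_mem hl (h.le hx)) (L.inv_mem hl)
  · rw [Subgroup.card_map_of_injective (MulAut.conj l).injective, h.card]
  · intro Q hQ hp
    obtain ⟨m, hm, h2⟩ := h.conj Q hQ hp
    refine ⟨l * m, L.mul_mem hl hm, fun x hx => ⟨_, h2 x hx, ?_⟩⟩
    simp [MulAut.conj_apply, mul_assoc]

/-- Lang's argument: a fixed-point-free automorphism `σ` makes `l ↦ σ(l)⁻¹ l` injective, hence
bijective, on each invariant subgroup. -/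
theorem IsFPF.lang {σ : MulAut Γ} {n : ℕ} (hσ : IsFPF σ n) {L : Subgroup Γ}
    (hL : ∀ x ∈ L, σ x ∈ L) {m : Γ} (hm : m ∈ L) : ∃ l ∈ L, (σ l)⁻¹ * l = m := by
  let f : L → L := fun l => ⟨(σ l)⁻¹ * l, L.mul_mem (L.inv_mem (hL _ l.2)) l.2⟩
  have hf : Function.Injective f := by
    intro a b hab
    have h : (σ a)⁻¹ * (a : Γ) = (σ b)⁻¹ * b := congrArg Subtype.val hab
    have h2 : σ ((b : Γ) * (a : Γ)⁻¹) = b * (a : Γ)⁻¹ := by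
      rw [map_mul, map_inv]
      calc σ b * (σ a)⁻¹ = σ b * ((σ a)⁻¹ * a) * (a : Γ)⁻¹ := by group
        _ = _ := by rw [h]; group
    have h3 := hσ.fpf 1 one_pos hσ.one_lt _ (by rw [pow_one]; exact h2)
    exact Subtype.ext (mul_inv_eq_one.1 h3).symm
  obtain ⟨l, hl⟩ := Finite.surjective_of_injective hf ⟨m, hm⟩
  exact ⟨l, l.2, congrArg Subtype.val hl⟩

/-- An invariant subgroup has an invariant Sylow `p`-subgroup: `σ(P)` is conjugate to `P`, and
Lang's argument absorbs the conjugating element. -/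
theorem IsFPF.exists_isSyl {σ : MulAut Γ} {n : ℕ} (hσ : IsFPF σ n) (p : ℕ) [Fact p.Prime]
    {L : Subgroup Γ} (hL : ∀ x ∈ L, σ x ∈ L) : ∃ P, IsSyl p P L ∧ ∀ x ∈ P, σ x ∈ P := by
  obtain ⟨P, hP⟩ := _root_.exists_isSyl p L
  obtain ⟨m, hm, h⟩ := hP.conj (P.map σ.toMonoidHom)
    (by rintro _ ⟨x, hx, rfl⟩; exact hL _ (hP.le hx)) (hP.isPGroup.map _)
  obtain ⟨l, hl, h2⟩ := hσ.lang hL (L.inv_mem hm)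
  refine ⟨_, hP.conjugate hl, ?_⟩
  rintro _ ⟨x, hx, rfl⟩
  refine ⟨_, h (σ x) ⟨x, hx, rfl⟩, ?_⟩
  have h3 : σ l = l * m := (eq_mul_inv_iff_mul_eq.1 (inv_mul_eq_iff_eq_mul.1 h2)).symm
  simp [MulAut.conj_apply, h3, mul_assoc]

theorem eq_of_forall_pow_dvd {X N : Subgroup Γ} (hX : X ≤ N)
    (h : ∀ p, p.Prime → p ^ (Nat.card N).factorization p ∣ Nat.card X) : X = N := by
  refine Subgroup.eq_of_le_of_card_ge hX (Nat.le_of_dvd Nat.card_pos ?_)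
  rw [← Nat.factorization_le_iff_dvd Nat.card_pos.ne' Nat.card_pos.ne']
  intro p
  by_cases hp : p.Prime
  · exact (hp.pow_dvd_iff_le_factorization Nat.card_pos.ne').1 (h p hp)
  · simp [Nat.factorization_eq_zero_of_not_prime _ hp]

/-- The averaging identity over a Frobenius group, in multiplicative notation: `R` acts on `E`
through `α`, and the powers `τ i` act on `E` (and `ρ i` on `R`) compatibly. -/
theorem prod_action_eq_pow {E R : Type*} [CommGroup E] [Group R] [Fintype R]
    (α : R → E →* E) (α_mul : ∀ r s e, α (r * s) e = α r (α s e)) (α_one : ∀ e, α 1 e = e)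
    (τ : ℕ → E →* E) (ρ : ℕ → R →* R) (τ0 : ∀ e, τ 0 e = e)
    (hτ : ∀ i r e, τ i (α r e) = α (ρ i r) (τ i e)) (n : ℕ)
    (hinj : ∀ i < n, ∀ r, ρ (i + 1) r = r → r = 1)
    (htr : ∀ e, ∏ i ∈ range (n + 1), τ i e = 1) (v : E) :
    ∏ k, α k v = v ^ Fintype.card R := by
  have h1 : ∀ i < n, ∏ k : R, α k (τ (i + 1) (α k⁻¹ v)) = ∏ k : R, α k (τ (i + 1) v) := by
    intro i hi
    have hb : Function.Bijective (fun k : R => k * (ρ (i + 1) k)⁻¹) := by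
      refine Finite.injective_iff_bijective.1 fun a b hab => ?_
      have h : a * (ρ (i + 1) a)⁻¹ = b * (ρ (i + 1) b)⁻¹ := hab
      have h2 : ρ (i + 1) (b⁻¹ * a) = b⁻¹ * a := by
        rw [map_mul, map_inv]
        calc (ρ (i + 1) b)⁻¹ * ρ (i + 1) a = b⁻¹ * (b * (ρ (i + 1) b)⁻¹) * ρ (i + 1) a := by group
          _ = _ := by rw [← h]; group
      exact (inv_mul_eq_one.1 (hinj i hi _ h2)).symm
    rw [← hb.prod_comp (fun k => α k (τ (i + 1) v))]
    refine prod_congr rfl fun k _ => ?_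
    rw [hτ, ← α_mul, map_inv]
  have h2 : ∏ i ∈ range (n + 1), ∏ k : R, α k (τ i (α k⁻¹ v)) = 1 := by
    rw [prod_comm]
    refine prod_eq_one fun k _ => ?_
    rw [← map_prod, htr, map_one]
  have h3 : ∏ i ∈ range (n + 1), ∏ k : R, α k (τ i v) = 1 := by
    rw [prod_comm]
    refine prod_eq_one fun k _ => ?_
    rw [← map_prod, htr, map_one]
  rw [prod_range_succ'] at h2 h3
  rw [prod_congr rfl fun i hi => h1 i (mem_range.1 hi)] at h2
  have h4 := mul_left_cancel (h2.trans h3.symm)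
  simp only [τ0, ← α_mul, mul_inv_cancel, α_one] at h4
  rw [← h4]
  simp

/-- A Frobenius group `R⟨σ⟩` acting on an abelian group `E` of order prime to `|R|`, with `σ`
fixed-point-free on `E`: the kernel `R` acts trivially. -/
theorem IsFPF.commute {σ : MulAut Γ} {n : ℕ} (hσ : IsFPF σ n) {E R : Subgroup Γ}
    (hE : ∀ x ∈ E, σ x ∈ E) (hR : ∀ x ∈ R, σ x ∈ R)
    (hcomm : ∀ x ∈ E, ∀ y ∈ E, x * y = y * x)
    (hnorm : ∀ r ∈ R, ∀ e ∈ E, r * e * r⁻¹ ∈ E)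
    (hcop : (Nat.card R).Coprime (Nat.card E)) {r e : Γ} (hr : r ∈ R) (he : e ∈ E) :
    r * e = e * r := by
  have hpow : ∀ L : Subgroup Γ, (∀ x ∈ L, σ x ∈ L) → ∀ i, ∀ x ∈ L, (σ ^ i) x ∈ L := by
    intro L hL i
    induction i with
    | zero => intro x hx; simpa using hx
    | succ i ih => intro x hx; rw [pow_succ', MulAut.mul_apply]; exact hL _ (ih x hx)
  let : CommGroup E := { (inferInstance : Group E) with
    mul_comm := fun a b => Subtype.ext (hcomm _ a.2 _ b.2) }
  let := Fintype.ofFinite R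
  let α : R → E →* E := fun r =>
    ((MulAut.conj (r : Γ)).toMonoidHom.comp E.subtype).codRestrict E
      (fun e => hnorm _ r.2 _ e.2)
  let τ : ℕ → E →* E := fun i =>
    (((σ ^ i).toMonoidHom).comp E.subtype).codRestrict E (fun e => hpow E hE i _ e.2)
  let ρ : ℕ → R →* R := fun i =>
    (((σ ^ i).toMonoidHom).comp R.subtype).codRestrict R (fun e => hpow R hR i _ e.2)
  have hα : ∀ r e, ((α r e : E) : Γ) = r * e * (r : Γ)⁻¹ := fun r e => rfl
  have hτv : ∀ i e, ((τ i e : E) : Γ) = (σ ^ i) e := fun i e => rfl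
  have hρv : ∀ i e, ((ρ i e : R) : Γ) = (σ ^ i) e := fun i e => rfl
  obtain ⟨m, rfl⟩ : ∃ m, n = m + 1 := ⟨n - 1, by have := hσ.one_lt; omega⟩
  have key := prod_action_eq_pow α
    (fun r s e => Subtype.ext (by simp [hα, mul_assoc])) (fun e => Subtype.ext (by simp [hα]))
    τ ρ (fun e => Subtype.ext (by simp [hτv]))
    (fun i r e => Subtype.ext (by simp [hτv, hα, hρv])) m
    (fun i hi r h => Subtype.ext (hσ.fpf (i + 1) (by omega) (by omega) _
      (congrArg Subtype.val h)))
    (fun e => by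
      have h1 : τ 1 (∏ i ∈ range (m + 1), τ i e) = ∏ i ∈ range (m + 1), τ i e := by
        rw [map_prod, prod_range_succ, prod_range_succ']
        have hlast : τ 1 (τ m e) = τ 0 e := Subtype.ext (by
          rw [hτv, hτv, hτv, ← MulAut.mul_apply, ← pow_add, add_comm 1 m, hσ.pow_eq, pow_zero])
        rw [hlast]
        congr 1
        refine prod_congr rfl fun i _ => Subtype.ext ?_
        rw [hτv, hτv, hτv, ← MulAut.mul_apply, ← pow_add, add_comm]
      exact Subtype.ext (hσ.fpf 1 one_pos hσ.one_lt _ (congrArg Subtype.val h1)))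
  -- every `|R|`-th power in `E` is a product over an `R`-orbit, hence fixed by `R`
  have hfix : ∀ v : E, α ⟨r, hr⟩ (v ^ Fintype.card R) = v ^ Fintype.card R := by
    intro v
    rw [← key, map_prod]
    rw [← (Group.mulLeft_bijective (⟨r, hr⟩ : R)).prod_comp (fun k => α k v)]
    exact prod_congr rfl fun k _ => Subtype.ext (by simp [hα, mul_assoc])
  obtain ⟨w, hw⟩ := (powCoprime (G := E) (n := Fintype.card R) (by
    rw [← Nat.card_eq_fintype_card]; exact hcop.symm)).surjective ⟨e, he⟩
  have h5 := hfix w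
  have hw' : w ^ Fintype.card R = ⟨e, he⟩ := hw
  rw [hw'] at h5
  have h6 : r * e * r⁻¹ = e := congrArg Subtype.val h5
  exact mul_inv_eq_iff_eq_mul.1 h6

end

/-! ### Products of cocycles and transfer -/

section

theorem mem_of_pow_mem_of_coprime {Γ : Type*} [Group Γ] {D : Subgroup Γ} {x : Γ} {a b : ℕ}
    (hab : a.Coprime b) (ha : x ^ a ∈ D) (hb : x ^ b ∈ D) : x ∈ D := by
  have h := Nat.gcd_eq_gcd_ab a b
  rw [hab.gcd_eq_one] at h
  have h2 : x = (x ^ a) ^ (a.gcdA b) * (x ^ b) ^ (a.gcdB b) := by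
    rw [← zpow_natCast, ← zpow_natCast, ← zpow_mul, ← zpow_mul, ← zpow_add, ← h]; simp
  rw [h2]
  exact D.mul_mem (D.zpow_mem ha _) (D.zpow_mem hb _)

/-- The product of a cocycle over the cycles of an element of prime order without fixed points. -/
theorem prod_cocycle_eq_one_of_no_fixed {Δ O A : Type*} [Group Δ] [MulAction Δ O] [Fintype O]
    [CommGroup A] (c : Δ → O → A) (hc : ∀ x y ω, c (x * y) ω = c x (y • ω) * c y ω)
    {q : ℕ} (hq : q.Prime) {s : Δ} (hs : s ^ q = 1) (hfix : ∀ ω : O, s • ω ≠ ω) :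
    ∏ ω, c s ω = 1 := by
  classical
  have hc1 : ∀ ω, c 1 ω = 1 := fun ω => by
    have := hc 1 1 ω
    simpa using this
  have hpow : ∀ ω (k : ℕ), ∏ i ∈ range k, c s (s ^ i • ω) = c (s ^ k) ω := by
    intro ω k
    induction k with
    | zero => simp [hc1]
    | succ k ih => rw [prod_range_succ, ih, pow_succ', hc, mul_comm]
  let r := MulAction.orbitRel (Subgroup.zpowers s) O
  rw [← Finset.prod_fiberwise (s := univ) (g := fun ω => (Quotient.mk r ω))]
  refine prod_eq_one fun y _ => ?_
  induction y using Quotient.inductionOn with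
  | h ω =>
    have himg : (univ.filter fun ω' => Quotient.mk r ω' = Quotient.mk r ω)
        = (range q).image (fun i => s ^ i • ω) := by
      ext ω'
      simp only [mem_filter, mem_univ, true_and, mem_image, mem_range]
      constructor
      · intro h
        obtain ⟨⟨g, hg⟩, h⟩ := (MulAction.orbitRel_apply.1 (Quotient.exact h))
        obtain ⟨k, rfl⟩ := Subgroup.mem_zpowers_iff.1 hg
        have h' : s ^ k • ω = ω' := h
        have hq0 : (q : ℤ) ≠ 0 := by exact_mod_cast hq.ne_zero
        refine ⟨(k % q).toNat, ?_, ?_⟩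
        · have := Int.emod_lt_of_pos k (b := q) (by have := hq.pos; omega)
          have := Int.emod_nonneg k hq0
          omega
        · rw [← zpow_natCast, Int.toNat_of_nonneg (Int.emod_nonneg k hq0), ← h']
          congr 1
          conv_rhs => rw [← Int.emod_add_mul_ediv k q, zpow_add, zpow_mul, zpow_natCast, hs]
          simp
      · rintro ⟨i, _, rfl⟩
        exact Quotient.sound (MulAction.orbitRel_apply.2
          ⟨⟨s ^ i, Subgroup.npow_mem_zpowers s i⟩, rfl⟩)
    rw [himg, prod_image, hpow, hs, hc1]
    have key : ∀ i j, i < j → j < q → s ^ i • ω ≠ s ^ j • ω := by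
      intro i j hij hj h
      have h1 : s ^ (j - i) ∈ MulAction.stabilizer Δ ω := by
        rw [MulAction.mem_stabilizer_iff]
        have h2 : j = i + (j - i) := by omega
        rw [h2, pow_add, mul_smul] at h
        exact (MulAction.injective _ h).symm
      refine hfix ω (MulAction.mem_stabilizer_iff.1 (mem_of_pow_mem_of_coprime ?_ h1
        (b := q) (by rw [hs]; exact Subgroup.one_mem _)))
      exact (Nat.coprime_of_lt_prime (by omega) (by omega) hq).symm
    intro i hi j hj h
    simp only [coe_range, Set.mem_Iio] at hi hj
    rcases lt_trichotomy i j with hij | hij | hij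
    · exact absurd h (key i j hij hj)
    · exact hij
    · exact absurd h.symm (key j i hij hi)

/-- In a `q`-group, a proper subgroup `M` and two cosets of a proper subgroup `Y` of index at
least `3` do not cover. -/
theorem exists_not_mem_of_isPGroup {Δ : Type*} [Group Δ] [Finite Δ] {q : ℕ} [Fact q.Prime]
    (hΔ : IsPGroup q Δ) {M Y : Subgroup Δ} (hM : M ≠ ⊤) (hY : Y ≠ ⊤) (hY2 : Y.index ≠ 2)
    (x : Δ) : ∃ u, u ∉ M ∧ u ∉ Y ∧ x * u⁻¹ ∉ Y := by
  classical
  by_contra! hcon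
  have hcov : (Set.univ : Set Δ) ⊆ (M : Set Δ) ∪ (((Y : Set Δ) \ {1}) ∪
      (fun y => y⁻¹ * x) '' (Y : Set Δ)) := by
    intro u _
    by_cases h1 : u ∈ M
    · exact Or.inl h1
    by_cases h2 : u ∈ Y
    · refine Or.inr (Or.inl ⟨h2, ?_⟩)
      rintro rfl
      exact h1 M.one_mem
    · exact Or.inr (Or.inr ⟨_, hcon u h1 h2, by simp⟩)
  have h1 := Set.ncard_le_ncard hcov (Set.toFinite _)
  have h2 := Set.ncard_union_le (M : Set Δ) (((Y : Set Δ) \ {1}) ∪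
      (fun y => y⁻¹ * x) '' (Y : Set Δ))
  have h3 := Set.ncard_union_le ((Y : Set Δ) \ {1}) ((fun y => y⁻¹ * x) '' (Y : Set Δ))
  have h4 := Set.ncard_image_le (f := fun y => y⁻¹ * x) (Set.toFinite (Y : Set Δ))
  have h5 := Set.ncard_sdiff_singleton_lt_of_mem Y.one_mem (Set.toFinite (Y : Set Δ))
  have hm : (M : Set Δ).ncard = Nat.card M := rfl
  have hy : (Y : Set Δ).ncard = Nat.card Y := rfl
  rw [Set.ncard_univ] at h1
  have e1 := M.card_mul_index
  have e2 := Y.card_mul_index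
  have pm : 0 < Nat.card M := Nat.card_pos
  have py : 0 < Nat.card Y := Nat.card_pos
  obtain ⟨i, hi⟩ := hΔ.index M
  obtain ⟨j, hj⟩ := hΔ.index Y
  have hi0 : i ≠ 0 := by rintro rfl; exact hM (Subgroup.index_eq_one.1 (by simpa using hi))
  have hj0 : j ≠ 0 := by rintro rfl; exact hY (Subgroup.index_eq_one.1 (by simpa using hj))
  have hq2 := (Fact.out : q.Prime).two_le
  have him : q ≤ M.index := by rw [hi]; exact Nat.le_self_pow hi0 q
  have hjm : q ≤ Y.index := by rw [hj]; exact Nat.le_self_pow hj0 q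
  rcases hq2.eq_or_lt with h | h
  · have hj1 : j ≠ 1 := by rintro rfl; apply hY2; rw [hj, ← h]; rfl
    have : 4 ≤ Y.index := by
      rw [hj, ← h]
      exact Nat.pow_le_pow_right (by norm_num : 2 > 0) (show 2 ≤ j by omega)
    nlinarith
  · have : 3 ≤ Y.index := by omega
    have : 3 ≤ M.index := by omega
    nlinarith

/-- The product of a cocycle over a transitive nontrivial `Δ`-set, for `Δ` a `q`-group in which
the elements outside `Y` have order dividing `q`. Point stabilizers lie in a normal maximal
subgroup `M`, so elements outside `M ∪ Y` have no fixed point; an element of `M` outside `Y` is a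
product of two elements outside `M ∪ Y`. -/
theorem prod_cocycle_eq_one_of_transitive {Δ O A : Type*} [Group Δ] [Finite Δ] [MulAction Δ O]
    [Fintype O] [MulAction.IsPretransitive Δ O] [CommGroup A] (c : Δ → O → A)
    (hc : ∀ x y ω, c (x * y) ω = c x (y • ω) * c y ω)
    {q : ℕ} [Fact q.Prime] (hΔ : IsPGroup q Δ) {Y : Subgroup Δ} (hY : Y ≠ ⊤)
    (hY2 : Y.index ≠ 2) (hpow : ∀ s ∉ Y, s ^ q = 1) (ω₀ : O)
    (hω₀ : MulAction.stabilizer Δ ω₀ ≠ ⊤) {x : Δ} (hx : x ∉ Y) :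
    ∏ ω, c x ω = 1 := by
  obtain ⟨M, hM, hle⟩ := (eq_top_or_exists_le_coatom _).resolve_left hω₀
  have := hΔ.isNilpotent
  have hMn : M.Normal := Subgroup.NormalizerCondition.normal_of_coatom M
    Group.normalizerCondition_of_isNilpotent hM
  have hout : ∀ u ∉ M, u ∉ Y → ∏ ω, c u ω = 1 := by
    intro u hu huY
    refine prod_cocycle_eq_one_of_no_fixed c hc (Fact.out : q.Prime) (hpow u huY) fun ω h => hu ?_
    obtain ⟨g, rfl⟩ := MulAction.exists_smul_eq Δ ω₀ ω
    have h2 : g⁻¹ * u * g ∈ M := hle (by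
      rw [MulAction.mem_stabilizer_iff, mul_smul, mul_smul, h, inv_smul_smul])
    have h3 := hMn.conj_mem _ h2 g
    simpa [mul_assoc] using h3
  by_cases hxM : x ∈ M
  · obtain ⟨u, h1, h2, h3⟩ := exists_not_mem_of_isPGroup hΔ hM.1 hY hY2 x
    have h4 : x * u⁻¹ ∉ M := fun h => h1 (by
      have := M.mul_mem (M.inv_mem h) hxM
      simpa using this)
    calc ∏ ω, c x ω = ∏ ω, c (x * u⁻¹ * u) ω := by simp
      _ = (∏ ω, c (x * u⁻¹) (u • ω)) * ∏ ω, c u ω := by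
        rw [← prod_mul_distrib]; exact prod_congr rfl fun ω _ => hc _ _ _
      _ = 1 := by
        rw [Fintype.prod_bijective (fun ω : O => u • ω) (MulAction.bijective u) _
          (fun ω => c (x * u⁻¹) ω) (fun _ => rfl), hout _ h4 h3, hout _ h1 h2, one_mul]
  · exact hout x hxM hx

/-- If `ω₀` is the only fixed point of `Δ`, then all other orbits contribute trivially to the
product of a cocycle. -/
theorem prod_cocycle_eq {Δ O A : Type*} [Group Δ] [Finite Δ] [MulAction Δ O]
    [Fintype O] [CommGroup A] (c : Δ → O → A)
    (hc : ∀ x y ω, c (x * y) ω = c x (y • ω) * c y ω)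
    {q : ℕ} [Fact q.Prime] (hΔ : IsPGroup q Δ) {Y : Subgroup Δ} (hY : Y ≠ ⊤)
    (hY2 : Y.index ≠ 2) (hpow : ∀ s ∉ Y, s ^ q = 1) (ω₀ : O)
    (hω₀ : ∀ ω : O, (∀ s : Δ, s • ω = ω) ↔ ω = ω₀) {x : Δ} (hx : x ∉ Y) :
    ∏ ω, c x ω = c x ω₀ := by
  classical
  let r := MulAction.orbitRel Δ O
  rw [← Finset.prod_fiberwise (s := univ) (g := fun ω => (Quotient.mk r ω))]
  rw [prod_eq_single (Quotient.mk r ω₀)]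
  · rw [show (univ.filter fun ω => Quotient.mk r ω = Quotient.mk r ω₀) = {ω₀} from ?_,
      prod_singleton]
    ext ω
    simp only [mem_filter, mem_univ, true_and, mem_singleton]
    refine ⟨fun h => ?_, fun h => by rw [h]⟩
    obtain ⟨g, h⟩ := MulAction.orbitRel_apply.1 (Quotient.exact h)
    rw [← h]
    exact (hω₀ ω₀).2 rfl g
  · intro y _ hy
    induction y using Quotient.inductionOn with
    | h ω =>
      rw [prod_subtype (p := fun ω' => ω' ∈ MulAction.orbit Δ ω)
        (univ.filter fun ω' => Quotient.mk r ω' = Quotient.mk r ω) (fun ω' => by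
          simp only [mem_filter, mem_univ, true_and]
          exact ⟨fun h => MulAction.orbitRel_apply.1 (Quotient.exact h),
            fun h => Quotient.sound (MulAction.orbitRel_apply.2 h)⟩)]
      refine prod_cocycle_eq_one_of_transitive (O := MulAction.orbit Δ ω)
        (fun s ω' => c s ω') (fun a b ω' => hc a b ω') hΔ hY hY2 hpow
        ⟨ω, MulAction.mem_orbit_self ω⟩ (fun h => hy ?_) hx
      rw [(hω₀ ω).1 fun s => ?_]
      have : s ∈ MulAction.stabilizer Δ
        (⟨ω, MulAction.mem_orbit_self ω⟩ : MulAction.orbit Δ ω) := by rw [h]; trivial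
      exact congrArg Subtype.val (MulAction.mem_stabilizer_iff.1 this)
  · intro h; exact absurd (mem_univ _) h

/-- Transfer: a self-normalizing `q`-subgroup `S`, all of whose elements outside a
suitable proper subgroup `Y` have order dividing `q`, forces a nontrivial abelian quotient. -/
theorem commutator_ne_top_of_transfer {Γ : Type*} [Group Γ] [Finite Γ] {q : ℕ} [Fact q.Prime]
    {S : Subgroup Γ} (hS : IsPGroup q S) (hN : ∀ g, (∀ s ∈ S, g * s * g⁻¹ ∈ S) → g ∈ S)
    {Y : Subgroup S} (hY : Y ≠ ⊤) (hY2 : Y.index ≠ 2) (hpow : ∀ s ∉ Y, s ^ q = 1) :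
    commutator Γ ≠ ⊤ := by
  classical
  let := Fintype.ofFinite (Γ ⧸ S)
  have hmem : ∀ (g : Γ) (ω : Γ ⧸ S), (g • ω).out⁻¹ * g * ω.out ∈ S := by
    intro g ω
    rw [mul_assoc, ← QuotientGroup.eq, QuotientGroup.out_eq', ← smul_eq_mul,
      ← MulAction.Quotient.smul_coe, QuotientGroup.out_eq']
  let c : Γ → Γ ⧸ S → Abelianization S := fun g ω => Abelianization.of ⟨_, hmem g ω⟩
  have hc : ∀ x y ω, c (x * y) ω = c x (y • ω) * c y ω := by
    intro x y ω
    simp only [c]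
    rw [← map_mul]
    congr 1
    apply Subtype.ext
    simp [mul_assoc, mul_smul]
  let V : Γ →* Abelianization S := MonoidHom.mk' (fun g => ∏ ω, c g ω) (by
    intro x y
    rw [prod_congr rfl fun ω _ => hc x y ω, prod_mul_distrib,
      Fintype.prod_bijective (fun ω : Γ ⧸ S => y • ω) (MulAction.bijective y) _
          (fun ω => c x ω) (fun _ => rfl)])
  have hnt : Nontrivial S := by
    rw [← not_subsingleton_iff_nontrivial]
    intro h
    exact hY (Subsingleton.elim _ _)
  have hnil := hS.isNilpotent
  have hcomm : commutator S ≠ ⊤ := (Group.IsSolvable.commutator_lt_top_of_nontrivial S).ne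
  obtain ⟨x, hx1, hx2, -⟩ := exists_not_mem_of_isPGroup hS hcomm hY hY2 1
  have hfixed : ∀ ω : Γ ⧸ S, (∀ s : S, s • ω = ω) ↔ ω = ((1 : Γ) : Γ ⧸ S) := by
    intro ω
    induction ω using QuotientGroup.induction_on with
    | H g =>
    constructor
    · intro h
      have h1 : g⁻¹ ∈ S := hN _ fun s hs => by
        have h2 : ((s * g : Γ) : Γ ⧸ S) = g := h ⟨s, hs⟩
        have h3 := S.inv_mem (QuotientGroup.eq.1 h2)
        simpa [mul_assoc] using h3
      exact QuotientGroup.eq.2 (by simpa using h1)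
    · intro h s
      rw [h]
      exact QuotientGroup.eq.2 (by simp)
  have hV := prod_cocycle_eq (Δ := S) (O := Γ ⧸ S) (fun s ω => c s ω)
    (fun a b ω => hc a b ω) hS hY hY2 hpow _ hfixed hx2
  intro htop
  have h1 : (x : Γ) ∈ V.ker := Abelianization.commutator_subset_ker V (by rw [htop]; trivial)
  have h2 : c x ((1 : Γ) : Γ ⧸ S) = 1 := by rw [← hV]; exact h1
  have hb : (((1 : Γ) : Γ ⧸ S).out) ∈ S := by
    have h4 : (((((1 : Γ) : Γ ⧸ S).out) : Γ) : Γ ⧸ S) = ((1 : Γ) : Γ ⧸ S) :=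
      QuotientGroup.out_eq' _
    have h5 := QuotientGroup.eq.1 h4
    simpa using h5
  have h3 : c x ((1 : Γ) : Γ ⧸ S) = Abelianization.of x := by
    have h4 : (x : Γ) • ((1 : Γ) : Γ ⧸ S) = ((1 : Γ) : Γ ⧸ S) := (hfixed _).2 rfl x
    have h5 : (⟨_, hmem x ((1 : Γ) : Γ ⧸ S)⟩ : S) = ⟨_, hb⟩⁻¹ * x * ⟨_, hb⟩ :=
      Subtype.ext (by simp only [h4]; rfl)
    simp only [c]
    rw [h5, map_mul, map_mul, map_inv, mul_comm, ← mul_assoc, mul_inv_cancel, one_mul]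
  rw [h3] at h2
  apply hx1
  rw [← Abelianization.ker_of]
  exact h2
end

/-! ### Invariant partitions -/

section
variable {Γ : Type*} [Group Γ] [Finite Γ] {σ : MulAut Γ} {n : ℕ} {C : Γ → Subgroup Γ}

theorem mem_normalizer_of_conj_mem {X : Subgroup Γ} {g : Γ} (h : ∀ x ∈ X, g * x * g⁻¹ ∈ X) :
    g ∈ Subgroup.normalizer (X : Set Γ) := by
  rw [Subgroup.mem_normalizer_iff]
  have hle : X.map (MulAut.conj g).toMonoidHom ≤ X := by
    rintro _ ⟨x, hx, rfl⟩
    exact h x hx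
  have heq := Subgroup.eq_of_le_of_card_ge hle
    (Subgroup.card_map_of_injective (MulAut.conj g).injective).ge
  refine fun x => ⟨h x, fun hx => ?_⟩
  rw [← heq] at hx
  obtain ⟨y, hy, hyx⟩ := hx
  have : y = x := by simpa [MulAut.conj_apply] using hyx
  exact this ▸ hy

theorem normalizer_invariant {X : Subgroup Γ} (hX : ∀ x ∈ X, σ x ∈ X) :
    ∀ g ∈ Subgroup.normalizer (X : Set Γ), σ g ∈ Subgroup.normalizer (X : Set Γ) := by
  intro g hg
  rw [Subgroup.mem_normalizer_iff] at hg
  have hle : X.map σ.toMonoidHom ≤ X := by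
    rintro _ ⟨x, hx, rfl⟩
    exact hX x hx
  have heq := Subgroup.eq_of_le_of_card_ge hle
    (Subgroup.card_map_of_injective σ.injective).ge
  refine mem_normalizer_of_conj_mem fun x hx => ?_
  rw [← heq] at hx
  obtain ⟨y, hy, rfl⟩ := hx
  have := hX _ ((hg y).1 hy)
  simpa using this

omit [Finite Γ] in
/-- If `x` and `y` commute, `x ^ k = 1` and `y ^ k ≠ 1`, then `x`, `y` and `x * y` lie in the same
part, because `(x * y) ^ k = y ^ k ≠ 1`. -/
theorem IsInvPart.mem_of_commute (hC : IsInvPart σ C) {x y : Γ} {k : ℕ} (hxy : x * y = y * x)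
    (hx : x ≠ 1) (hxk : x ^ k = 1) (hyk : y ^ k ≠ 1) : y ∈ C x := by
  have hy : y ≠ 1 := by rintro rfl; simp at hyk
  have h1 : (x * y) ^ k = y ^ k := by rw [(show Commute x y from hxy).mul_pow, hxk, one_mul]
  have hxy1 : x * y ≠ 1 := by intro h; rw [h, one_pow] at h1; exact hyk h1.symm
  have h2 : C (y ^ k) = C y := hC.eq_of_mem y _ hy hyk ((C y).pow_mem (hC.self y) k)
  have h3 : C (y ^ k) = C (x * y) := hC.eq_of_mem _ _ hxy1 hyk
    (h1 ▸ (C (x * y)).pow_mem (hC.self _) k)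
  have h4 : x * y ∈ C y := by rw [← h2, h3]; exact hC.self _
  have h5 : x ∈ C y := by
    have := (C y).mul_mem h4 ((C y).inv_mem (hC.self y))
    simpa using this
  rw [hC.eq_of_mem y x hy hx h5]
  exact hC.self y

omit [Finite Γ] in
/-- Commuting nontrivial elements of coprime orders lie in the same part. -/
theorem IsInvPart.mem_of_commute_of_coprime (hC : IsInvPart σ C) {x y : Γ}
    (hxy : x * y = y * x) (hx : x ≠ 1) (h : (orderOf x).Coprime (orderOf y)) : y ∈ C x := by
  by_cases hy : y = 1
  · rw [hy]; exact (C x).one_mem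
  · refine hC.mem_of_commute hxy hx (pow_orderOf_eq_one x) fun h2 => hy ?_
    have := Nat.Coprime.eq_one_of_dvd h.symm (orderOf_dvd_of_pow_eq_one h2)
    exact orderOf_eq_one_iff.1 this

omit [Finite Γ] in
/-- A part containing `s ≠ 1` together with `σ s` is invariant under `σ`. -/
theorem IsInvPart.invariant (hC : IsInvPart σ C) {x s : Γ} (hx : x ≠ 1) (hs : s ≠ 1)
    (h1 : s ∈ C x) (h2 : σ s ∈ C x) : ∀ y ∈ C x, σ y ∈ C x := by
  intro y hy
  rw [← hC.eq_of_mem x s hx hs h1] at hy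
  have h3 := hC.map _ _ hy
  rwa [hC.eq_of_mem x (σ s) hx (by simpa using hs) h2] at h3

theorem card_coprime_of_isPGroup {p q : ℕ} [Fact p.Prime] [Fact q.Prime] (hpq : p ≠ q)
    {P Q : Subgroup Γ} (hP : IsPGroup p P) (hQ : IsPGroup q Q) :
    (Nat.card P).Coprime (Nat.card Q) := by
  obtain ⟨a, ha⟩ := IsPGroup.iff_card.1 hP
  obtain ⟨b, hb⟩ := IsPGroup.iff_card.1 hQ
  rw [ha, hb]
  exact Nat.Coprime.pow _ _ ((Nat.coprime_primes Fact.out Fact.out).2 hpq)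

theorem orderOf_coprime_of_mem {p q : ℕ} [Fact p.Prime] [Fact q.Prime] (hpq : p ≠ q)
    {P Q : Subgroup Γ} (hP : IsPGroup p P) (hQ : IsPGroup q Q) {x y : Γ} (hx : x ∈ P)
    (hy : y ∈ Q) : (orderOf x).Coprime (orderOf y) :=
  ((card_coprime_of_isPGroup hpq hP hQ).coprime_dvd_left
    (P.orderOf_dvd_natCard hx)).coprime_dvd_right (Q.orderOf_dvd_natCard hy)

/-- The centre of a subgroup `P`, as a subgroup of the ambient group. -/
def centerIn (P : Subgroup Γ) : Subgroup Γ := P ⊓ Subgroup.centralizer (P : Set Γ)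

omit [Finite Γ] in
theorem mem_centerIn {P : Subgroup Γ} {z : Γ} :
    z ∈ centerIn P ↔ z ∈ P ∧ ∀ x ∈ P, x * z = z * x := by
  simp [centerIn, Subgroup.mem_centralizer_iff]

theorem exists_mem_centerIn {p : ℕ} [Fact p.Prime] {P : Subgroup Γ} (hP : IsPGroup p P)
    (h : P ≠ ⊥) : ∃ z ∈ centerIn P, z ≠ 1 := by
  have : Nontrivial P := (Subgroup.nontrivial_iff_ne_bot P).2 h
  have := hP.center_nontrivial
  obtain ⟨⟨z, hz⟩, hz1⟩ := exists_ne (1 : Subgroup.center P)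
  refine ⟨z, mem_centerIn.2 ⟨z.2, fun x hx => ?_⟩, fun h => hz1 (Subtype.ext (Subtype.ext h))⟩
  exact congrArg Subtype.val (Subgroup.mem_center_iff.1 hz ⟨x, hx⟩)

theorem centerIn_invariant {P : Subgroup Γ} (hP : ∀ x ∈ P, σ x ∈ P) :
    ∀ x ∈ centerIn P, σ x ∈ centerIn P := by
  intro z hz
  obtain ⟨h1, h2⟩ := mem_centerIn.1 hz
  have hle : P.map σ.toMonoidHom ≤ P := by
    rintro _ ⟨x, hx, rfl⟩
    exact hP x hx
  have heq := Subgroup.eq_of_le_of_card_ge hle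
    (Subgroup.card_map_of_injective σ.injective).ge
  refine mem_centerIn.2 ⟨hP _ h1, fun x hx => ?_⟩
  rw [← heq] at hx
  obtain ⟨y, hy, rfl⟩ := hx
  have := congrArg σ (h2 y hy)
  simpa using this

omit [Finite Γ] in
theorem conj_mem_centerIn {P : Subgroup Γ} {g : Γ} (hg : g ∈ Subgroup.normalizer (P : Set Γ))
    {z : Γ} (hz : z ∈ centerIn P) : g * z * g⁻¹ ∈ centerIn P := by
  obtain ⟨h1, h2⟩ := mem_centerIn.1 hz
  refine mem_centerIn.2 ⟨(Subgroup.mem_normalizer_iff.1 hg z).1 h1, fun x hx => ?_⟩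
  have h3 := h2 _ ((Subgroup.mem_normalizer_iff''.1 hg x).1 hx)
  have h4 := congrArg (fun t => g * t * g⁻¹) h3
  simpa [mul_assoc] using h4

/-- A `q`-subgroup normalizing a `p`-subgroup, both invariant under the fixed-point-free `σ`,
centralizes the centre of the `p`-subgroup. -/
theorem IsFPF.commute_centerIn (hσ : IsFPF σ n) {p q : ℕ} [Fact p.Prime] [Fact q.Prime]
    (hpq : p ≠ q) {P Q : Subgroup Γ} (hP : IsPGroup p P) (hQ : IsPGroup q Q)
    (hPσ : ∀ x ∈ P, σ x ∈ P) (hQσ : ∀ x ∈ Q, σ x ∈ Q)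
    (hN : Q ≤ Subgroup.normalizer (P : Set Γ)) {y z : Γ} (hy : y ∈ Q) (hz : z ∈ centerIn P) :
    y * z = z * y := by
  refine hσ.commute (centerIn_invariant hPσ) hQσ (fun a ha b hb => ?_)
    (fun r hr e he => conj_mem_centerIn (hN hr) he)
    (card_coprime_of_isPGroup hpq.symm hQ (hP.to_le inf_le_left)) hy hz
  exact (mem_centerIn.1 hb).2 a (mem_centerIn.1 ha).1

/-- If an invariant part `X` contains nontrivial `p`-elements, then for `q ≠ p` every
`q`-element normalizing `X` lies in `X`. -/
theorem IsInvPart.mem_of_normalizer (hσ : IsFPF σ n) (hC : IsInvPart σ C) {x : Γ} (hx : x ≠ 1)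
    (hX : ∀ y ∈ C x, σ y ∈ C x) {p q : ℕ} [Fact p.Prime] [Fact q.Prime] (hpq : p ≠ q)
    (hp : p ∣ Nat.card (C x)) {Q : Subgroup Γ} (hQ : IsPGroup q Q)
    (hQN : Q ≤ Subgroup.normalizer (C x : Set Γ)) : Q ≤ C x := by
  obtain ⟨P, hP, hPσ⟩ := hσ.exists_isSyl p hX
  have hPne : P ≠ ⊥ := by
    rintro rfl
    have h1 := hP.card
    rw [Subgroup.card_bot] at h1
    have h2 := (Fact.out : p.Prime).factorization_pos_of_dvd Nat.card_pos.ne' hp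
    exact absurd h1.symm (Nat.one_lt_pow h2.ne' (Fact.out : p.Prime).one_lt).ne'
  obtain ⟨z, hz, hz1⟩ := exists_mem_centerIn hP.isPGroup hPne
  let N := Subgroup.normalizer (C x : Set Γ)
  let L := N ⊓ Subgroup.normalizer (P : Set Γ)
  have hL : ∀ g ∈ L, σ g ∈ L := fun g hg =>
    ⟨normalizer_invariant hX g hg.1, normalizer_invariant hPσ g hg.2⟩
  obtain ⟨T, hT, hTσ⟩ := hσ.exists_isSyl q hL
  have hTX : T ≤ C x := by
    intro t ht
    have h1 := hσ.commute_centerIn hpq hP.isPGroup hT.isPGroup hPσ hTσ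
      (hT.le.trans inf_le_right) ht hz
    have hzP := (mem_centerIn.1 hz).1
    rw [← hC.eq_of_mem x z hx hz1 (hP.le hzP)]
    exact hC.mem_of_commute_of_coprime h1.symm hz1
      (orderOf_coprime_of_mem hpq hP.isPGroup hT.isPGroup hzP ht)
  intro y hy
  have hyN := hQN hy
  have hN : ∀ g ∈ N, ∀ w, w ∈ C x ↔ g * w * g⁻¹ ∈ C x := fun g hg =>
    Subgroup.mem_normalizer_iff.1 hg
  have hXN : C x ≤ N := Subgroup.le_normalizer
  -- Frattini: `l = c y` normalizes `P`
  obtain ⟨c, hc, hcP⟩ := hP.conj (P.map (MulAut.conj y).toMonoidHom)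
    (by rintro _ ⟨w, hw, rfl⟩; exact (hN y hyN w).1 (hP.le hw)) (hP.isPGroup.map _)
  have hl : c * y ∈ L := by
    refine ⟨N.mul_mem (hXN hc) hyN, mem_normalizer_of_conj_mem fun w hw => ?_⟩
    have := hcP _ ⟨w, hw, rfl⟩
    simpa [MulAut.conj_apply, mul_assoc] using this
  have hpow : ∀ k : ℕ, ∃ d ∈ C x, (c * y) ^ k = d * y ^ k := by
    intro k
    induction k with
    | zero => exact ⟨1, (C x).one_mem, by simp⟩
    | succ k ih =>
      obtain ⟨d, hd, h⟩ := ih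
      refine ⟨c * (y * d * y⁻¹), (C x).mul_mem hc ((hN y hyN d).1 hd), ?_⟩
      rw [pow_succ', h, pow_succ']
      simp [mul_assoc]
  obtain ⟨a, ha⟩ := hQ ⟨y, hy⟩
  have hya : y ^ q ^ a = 1 := congrArg Subtype.val ha
  have h1 : (c * y) ^ q ^ a ∈ C x := by
    obtain ⟨d, hd, h⟩ := hpow (q ^ a)
    rw [h, hya, mul_one]; exact hd
  obtain ⟨b, m, hm, hbm⟩ := Nat.exists_eq_pow_mul_and_not_dvd
    (orderOf_pos (c * y)).ne' q (Fact.out : q.Prime).ne_one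
  have h2 : (c * y) ^ m ∈ C x := by
    have hz : IsPGroup q (Subgroup.zpowers ((c * y) ^ m)) := by
      refine IsPGroup.of_card (n := (Nat.factorization (orderOf ((c*y)^m)) q)) ?_
      have hdvd : orderOf ((c * y) ^ m) ∣ q ^ b := by
        refine orderOf_dvd_of_pow_eq_one ?_
        rw [← pow_mul, mul_comm, ← hbm, pow_orderOf_eq_one]
      obtain ⟨e, -, he⟩ := (Nat.dvd_prime_pow Fact.out).1 hdvd
      rw [Nat.card_zpowers, he, (Fact.out : q.Prime).factorization_pow]
      simp
    obtain ⟨g, hg, hgT⟩ := hT.conj _ (Subgroup.zpowers_le.2 (L.pow_mem hl m)) hz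
    exact (hN g hg.1 _).2 (hTX (hgT _ (Subgroup.mem_zpowers _)))
  have h3 : c * y ∈ C x := mem_of_pow_mem_of_coprime
    (((Nat.Prime.coprime_iff_not_dvd Fact.out).2 hm).symm.pow_right a) h2 h1
  have := (C x).mul_mem ((C x).inv_mem hc) h3
  simpa using this

/-- Over a perfect group, an invariant Sylow subgroup `S` lies in a single part. Otherwise `S` is
self-normalizing, and for a central `z` of order `q` all elements of `S` outside the part of `z`
have order dividing `q`; the transfer into `S` then gives a proper commutator subgroup. -/
theorem IsInvPart.exists_sylow_le (hσ : IsFPF σ n) (hC : IsInvPart σ C)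
    (hperf : commutator Γ = ⊤) {q : ℕ} [Fact q.Prime] {S : Subgroup Γ} (hS : IsSyl q S ⊤)
    (hSσ : ∀ x ∈ S, σ x ∈ S) (hne : S ≠ ⊥) : ∃ x ∈ S, x ≠ 1 ∧ S ≤ C x := by
  by_contra! hcon
  obtain ⟨z₀, hz₀, hz₀1⟩ := exists_mem_centerIn hS.isPGroup hne
  -- `S` is self-normalizing
  have hself : S = Subgroup.normalizer (S : Set Γ) := by
    refine eq_of_forall_pow_dvd Subgroup.le_normalizer fun p hp => ?_
    have := Fact.mk hp
    by_cases hpq : p = q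
    · subst hpq
      rw [hS.card]
      refine pow_dvd_pow _ ?_
      rw [Subgroup.card_top]
      exact (Nat.factorization_le_iff_dvd Nat.card_pos.ne' Nat.card_pos.ne').2
        (Subgroup.card_subgroup_dvd_card _) p
    obtain ⟨R, hR, hRσ⟩ := hσ.exists_isSyl p (normalizer_invariant hSσ)
    rw [← hR.card]
    have hRbot : R = ⊥ := by
      rw [Subgroup.eq_bot_iff_forall]
      by_contra! hr
      obtain ⟨r, hr, hr1⟩ := hr
      have hzS := (mem_centerIn.1 hz₀).1
      have hRz : R ≤ C z₀ := fun t ht => hC.mem_of_commute_of_coprime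
        (hσ.commute_centerIn (Ne.symm hpq) hS.isPGroup hR.isPGroup hSσ hRσ hR.le ht hz₀).symm
        hz₀1 (orderOf_coprime_of_mem (Ne.symm hpq) hS.isPGroup hR.isPGroup hzS ht)
      refine hcon z₀ hzS hz₀1 (hC.mem_of_normalizer hσ hz₀1
        (hC.invariant hz₀1 hr1 (hRz hr) (hRz (hRσ r hr))) hpq ?_ hS.isPGroup ?_)
      · refine (hR.isPGroup.card_eq_or_dvd.resolve_left fun h => hr1 ?_).trans
          (Subgroup.card_dvd_of_le hRz)
        have h2 := Subgroup.card_eq_one.1 h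
        rw [h2] at hr
        exact hr
      · intro s hs
        refine mem_normalizer_of_conj_mem fun y hy => ?_
        have h3 := hC.conj s _ _ hy
        rwa [(mem_centerIn.1 hz₀).2 s hs, mul_inv_cancel_right] at h3
    rw [hRbot, Subgroup.card_bot]
    exact one_dvd _
  obtain ⟨z, hz, hz1, hzq⟩ : ∃ z ∈ centerIn S, z ≠ 1 ∧ z ^ q = 1 := by
    have hq := (hS.isPGroup.to_le (inf_le_left : centerIn S ≤ S)).card_eq_or_dvd.resolve_left
      fun h => hz₀1 (by
        have h2 : centerIn S = ⊥ := Subgroup.card_eq_one.1 h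
        rw [h2] at hz₀
        exact hz₀)
    obtain ⟨⟨z, hz⟩, hzo⟩ := exists_prime_orderOf_dvd_card' q hq
    rw [Subgroup.orderOf_mk] at hzo
    refine ⟨z, hz, ?_, hzo ▸ pow_orderOf_eq_one z⟩
    rintro rfl
    rw [orderOf_one] at hzo
    exact (Fact.out : q.Prime).ne_one hzo.symm
  have hzS := (mem_centerIn.1 hz).1
  -- `Y` is the Hughes subgroup of `S`; it lies in the part of `z`
  let Y : Subgroup S := Subgroup.closure {s | s ^ q ≠ 1}
  have hpow : ∀ s ∉ Y, s ^ q = 1 := fun s hs => by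
    by_contra h
    exact hs (Subgroup.subset_closure h)
  have hYle : Y ≤ (C z).subgroupOf S := by
    refine (Subgroup.closure_le _).2 fun s hs => ?_
    refine hC.mem_of_commute ((mem_centerIn.1 hz).2 s s.2).symm hz1 hzq fun h => hs ?_
    exact Subtype.ext h
  have hYtop : Y ≠ ⊤ := by
    intro h
    refine hcon z hzS hz1 fun s hs => ?_
    have : (⟨s, hs⟩ : S) ∈ Y := by rw [h]; trivial
    exact hYle this
  have hYσ : ∀ s ∈ Y, (⟨σ s, hSσ s s.2⟩ : S) ∈ Y := by
    let f : S →* S := (σ.toMonoidHom.comp S.subtype).codRestrict S fun s => hSσ s s.2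
    have : Y ≤ Y.comap f := by
      refine (Subgroup.closure_le _).2 fun s hs => Subgroup.subset_closure fun h => hs ?_
      have h2 : σ ((s : Γ) ^ q) = 1 := by rw [map_pow]; exact congrArg Subtype.val h
      exact Subtype.ext ((map_eq_one_iff σ σ.injective).1 h2)
    exact this
  refine commutator_ne_top_of_transfer hS.isPGroup (fun g hg => ?_) hYtop (fun h2 => ?_) hpow hperf
  · rw [hself]
    exact mem_normalizer_of_conj_mem hg
  -- if `Y` had index `2`, the nontrivial coset of `Y` would contain a fixed point of `σ`
  · obtain ⟨t, ht⟩ : ∃ t, t ∉ Y := by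
      by_contra! h
      exact hYtop (Subgroup.eq_top_iff' Y |>.2 h)
    have hσt : (⟨σ t, hSσ t t.2⟩ : S) ∉ Y := fun h => by
      -- `σ` permutes `Y`
      have hmap : ∀ y ∈ Y.map S.subtype, σ y ∈ Y.map S.subtype := by
        rintro _ ⟨y, hy, rfl⟩
        exact ⟨_, hYσ y hy, rfl⟩
      have hle : (Y.map S.subtype).map σ.toMonoidHom ≤ Y.map S.subtype := by
        rintro _ ⟨x, hx, rfl⟩
        exact hmap x hx
      have heq := Subgroup.eq_of_le_of_card_ge hle
        (Subgroup.card_map_of_injective σ.injective).ge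
      have h5 : σ t ∈ (Y.map S.subtype).map σ.toMonoidHom := by
        rw [heq]; exact ⟨_, h, rfl⟩
      obtain ⟨_, ⟨y, hy, rfl⟩, hyt⟩ := h5
      have h6 : (y : Γ) = t := σ.injective hyt
      exact ht (Subtype.ext h6 ▸ hy)
    have hm : (⟨σ t, hSσ t t.2⟩ : S) * t⁻¹ ∈ Y :=
      (Subgroup.mul_mem_iff_of_index_two h2).2 (by simp [hσt, ht])
    obtain ⟨_, ⟨y, hy, rfl⟩, hy2⟩ := hσ.lang (L := Y.map S.subtype)
      (by rintro _ ⟨y, hy, rfl⟩; exact ⟨_, hYσ y hy, rfl⟩) ⟨_, hm, rfl⟩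
    have hy3 : (σ y)⁻¹ * (y : Γ) = σ t * (t : Γ)⁻¹ := hy2
    have hfix : σ ((y : Γ) * t) = y * t := by
      rw [map_mul, eq_mul_inv_iff_mul_eq.1 (inv_mul_eq_iff_eq_mul.1 hy3 |>.trans
        (mul_assoc _ _ _).symm) ]
    have h7 := hσ.fpf 1 one_pos hσ.one_lt _ (by rw [pow_one]; exact hfix)
    have h8 : y * t = 1 := Subtype.ext h7
    exact ht (by rw [← inv_eq_of_mul_eq_one_right h8]; exact Y.inv_mem hy)

/-- An invariant Sylow subgroup contained in a part: that part is self-normalizing. -/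
theorem IsInvPart.normalizer_eq (hσ : IsFPF σ n) (hC : IsInvPart σ C) {q : ℕ} [Fact q.Prime]
    {S : Subgroup Γ} (hS : IsSyl q S ⊤) (hSσ : ∀ x ∈ S, σ x ∈ S) {x : Γ} (hxS : x ∈ S)
    (hx : x ≠ 1) (hle : S ≤ C x) : C x = Subgroup.normalizer (C x : Set Γ) := by
  have hX := hC.invariant hx hx (hC.self x) (hle (hSσ x hxS))
  refine eq_of_forall_pow_dvd Subgroup.le_normalizer fun p hp => ?_
  have := Fact.mk hp
  by_cases hpq : p = q
  · subst hpq
    refine dvd_trans ?_ (Subgroup.card_dvd_of_le hle)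
    rw [hS.card]
    refine pow_dvd_pow _ ?_
    rw [Subgroup.card_top]
    exact (Nat.factorization_le_iff_dvd Nat.card_pos.ne' Nat.card_pos.ne').2
      (Subgroup.card_subgroup_dvd_card _) p
  · obtain ⟨P, hP⟩ := _root_.exists_isSyl p (Subgroup.normalizer (C x : Set Γ))
    rw [← hP.card]
    refine Subgroup.card_dvd_of_le (hC.mem_of_normalizer hσ hx hX (Ne.symm hpq) ?_
      hP.isPGroup hP.le)
    refine (hS.isPGroup.card_eq_or_dvd.resolve_left fun h => hx ?_).trans
      (Subgroup.card_dvd_of_le hle)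
    have h2 := Subgroup.card_eq_one.1 h
    rw [h2] at hxS
    exact hxS

/-- The conjugates of a self-normalizing part cover at least half of the group. -/
theorem IsInvPart.card_le_two_mul (hC : IsInvPart σ C) {x : Γ} (hx : x ≠ 1)
    (hN : C x = Subgroup.normalizer (C x : Set Γ)) :
    Nat.card Γ ≤ 2 * {u : Γ | u ≠ 1 ∧ ∃ g, g * u * g⁻¹ ∈ C x}.ncard := by
  classical
  let := Fintype.ofFinite Γ
  -- each fibre of `(g, u) ↦ g u g⁻¹` over `D` has at most `|C x|` elements
  let D : Finset (Γ × Γ) := univ ×ˢ (univ.filter fun u => u ∈ C x ∧ u ≠ 1)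
  let f : Γ × Γ → Γ := fun a => a.1 * a.2 * a.1⁻¹
  have hfib : ∀ b ∈ D.image f, (D.filter fun a => f a = b).card ≤ Nat.card (C x) := by
    intro b hb
    obtain ⟨⟨g₀, u₀⟩, h0, hb0⟩ := mem_image.1 hb
    simp only [D, mem_product, mem_univ, mem_filter, true_and] at h0
    rw [Nat.card_eq_fintype_card, Fintype.card_subtype]
    refine card_le_card_of_injOn (fun a => g₀⁻¹ * a.1) ?_ ?_
    · rintro ⟨g, u⟩ ha
      simp only [D, coe_filter, mem_product, mem_univ, mem_filter, true_and, Set.mem_ofPred_eq] at ha ⊢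
      obtain ⟨⟨hu, hu1⟩, hfu⟩ := ha
      have h1 : (g₀⁻¹ * g) * u * (g₀⁻¹ * g)⁻¹ = u₀ := by
        have h2 : g * u * g⁻¹ = g₀ * u₀ * g₀⁻¹ := hfu.trans hb0.symm
        calc (g₀⁻¹ * g) * u * (g₀⁻¹ * g)⁻¹ = g₀⁻¹ * (g * u * g⁻¹) * g₀ := by group
          _ = _ := by rw [h2]; group
      rw [hN]
      refine mem_normalizer_of_conj_mem fun w hw => ?_
      rw [← hC.eq_of_mem x u hx hu1 hu] at hw
      have h3 := hC.conj (g₀⁻¹ * g) _ _ hw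
      rwa [h1, hC.eq_of_mem x u₀ hx h0.2 h0.1] at h3
    · rintro ⟨g, u⟩ ha ⟨g', u'⟩ ha' h
      simp only [coe_filter, Set.mem_ofPred_eq] at ha ha'
      have hg : g = g' := mul_left_cancel h
      subst hg
      have h2 : g * u * g⁻¹ = g * u' * g⁻¹ := ha.2.trans ha'.2.symm
      simp only [mul_left_inj, mul_right_inj] at h2
      rw [h2]
  have h1 := card_le_mul_card_image D _ hfib
  have h2 : D.card = Nat.card Γ * (Nat.card (C x) - 1) := by
    rw [card_product, card_univ, Nat.card_eq_fintype_card]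
    congr 1
    have : (univ.filter fun u => u ∈ C x ∧ u ≠ 1) = (univ.filter fun u => u ∈ C x).erase 1 := by
      ext u; simp [and_comm]
    rw [this, card_erase_of_mem (by simp), Nat.card_eq_fintype_card, Fintype.card_subtype]
  have h3 : (D.image f).card ≤ {u : Γ | u ≠ 1 ∧ ∃ g, g * u * g⁻¹ ∈ C x}.ncard := by
    rw [← Set.ncard_coe_finset]
    refine Set.ncard_le_ncard ?_ (Set.toFinite _)
    intro b hb
    obtain ⟨⟨g, u⟩, ha, rfl⟩ := mem_image.1 (mem_coe.1 hb)
    simp only [D, mem_product, mem_univ, mem_filter, true_and] at ha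
    refine ⟨fun h => ha.2 ?_, g⁻¹, ?_⟩
    · simpa [f] using h
    · simpa [f, mul_assoc] using ha.1
  have h4 : 2 ≤ Nat.card (C x) := by
    have : Nontrivial (C x) := ⟨⟨⟨x, hC.self x⟩, 1, fun h => hx (congrArg Subtype.val h)⟩⟩
    exact Finite.one_lt_card
  rw [h2] at h1
  obtain ⟨k, hk⟩ : ∃ k, Nat.card (C x) = k + 2 := ⟨_, (Nat.sub_add_cancel h4).symm⟩
  rw [hk] at h1
  simp only [Nat.add_succ_sub_one] at h1
  nlinarith

/-- A perfect group with a fixed-point-free cyclic group of automorphisms has no nontrivial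
partition invariant under conjugation and these automorphisms. The parts containing invariant
Sylow subgroups are self-normalizing, hence all conjugate since two non-conjugate ones would cover
too many elements; so a single part has order divisible by that of the group. -/
theorem IsInvPart.exists_eq_top [Nontrivial Γ] (hσ : IsFPF σ n) (hC : IsInvPart σ C)
    (hperf : commutator Γ = ⊤) : ∃ x, x ≠ 1 ∧ C x = ⊤ := by
  -- every prime divisor yields a self-normalizing part containing a Sylow subgroup
  have hpart : ∀ q, q.Prime → q ∣ Nat.card Γ → ∃ x, x ≠ 1 ∧
      C x = Subgroup.normalizer (C x : Set Γ) ∧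
      ∃ S, IsSyl q S ⊤ ∧ S ≤ C x := by
    intro q hq hqd
    have := Fact.mk hq
    obtain ⟨S, hS, hSσ⟩ := hσ.exists_isSyl q (L := ⊤) (fun _ _ => trivial)
    have hne : S ≠ ⊥ := by
      rintro rfl
      have h1 := hS.card
      rw [Subgroup.card_bot, Subgroup.card_top] at h1
      have h2 := hq.factorization_pos_of_dvd Nat.card_pos.ne' hqd
      exact absurd h1.symm (Nat.one_lt_pow h2.ne' hq.one_lt).ne'
    obtain ⟨x, hxS, hx, hle⟩ := hC.exists_sylow_le hσ hperf hS hSσ hne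
    exact ⟨x, hx, hC.normalizer_eq hσ hS hSσ hxS hx hle, S, hS, hle⟩
  obtain ⟨q₀, hq₀, hq₀d⟩ := Nat.exists_prime_and_dvd (Finite.one_lt_card (α := Γ)).ne'
  obtain ⟨x, hx, hN, -⟩ := hpart q₀ hq₀ hq₀d
  refine ⟨x, hx, eq_of_forall_pow_dvd le_top fun q hq => ?_⟩
  by_cases hqd : q ∣ Nat.card Γ
  swap
  · rw [Subgroup.card_top, Nat.factorization_eq_zero_of_not_dvd hqd, pow_zero]
    exact one_dvd _
  obtain ⟨y, hy, hNy, S, hS, hSy⟩ := hpart q hq hqd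
  -- two non-conjugate self-normalizing parts would cover too many elements
  obtain ⟨g, u, hu, huy, hux⟩ : ∃ g u, u ≠ 1 ∧ u ∈ C y ∧ g * u * g⁻¹ ∈ C x := by
    by_contra! hcon
    have h1 := hC.card_le_two_mul hx hN
    have h2 := hC.card_le_two_mul hy hNy
    have hdisj : Disjoint {u : Γ | u ≠ 1 ∧ ∃ g, g * u * g⁻¹ ∈ C x}
        {u : Γ | u ≠ 1 ∧ ∃ g, g * u * g⁻¹ ∈ C y} := by
      rw [Set.disjoint_left]
      rintro u ⟨hu, g, hg⟩ ⟨-, k, hk⟩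
      refine hcon (g * k⁻¹) (k * u * k⁻¹) (by simpa using hu) hk ?_
      simpa [mul_assoc] using hg
    have h3 := Set.ncard_union_eq hdisj
    have h4 : ({u : Γ | u ≠ 1 ∧ ∃ g, g * u * g⁻¹ ∈ C x} ∪
        {u : Γ | u ≠ 1 ∧ ∃ g, g * u * g⁻¹ ∈ C y}) ⊂ Set.univ := by
      rw [Set.ssubset_univ_iff]
      intro h
      have : (1 : Γ) ∈ (Set.univ : Set Γ) := trivial
      rw [← h] at this
      rcases this with h | h <;> exact h.1 rfl
    have h5 := Set.ncard_lt_ncard h4 (Set.toFinite _)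
    rw [Set.ncard_univ] at h5
    omega
  have hsub : S.map (MulAut.conj g).toMonoidHom ≤ C x := by
    rintro _ ⟨s, hs, rfl⟩
    have h1 := hSy hs
    rw [← hC.eq_of_mem y u hy hu huy] at h1
    have h2 := hC.conj g _ _ h1
    rwa [hC.eq_of_mem x _ hx (by simpa using hu) hux] at h2
  rw [← hS.card, ← Subgroup.card_map_of_injective (f := (MulAut.conj g).toMonoidHom)
    (MulAut.conj g).injective]
  exact Subgroup.card_dvd_of_le hsub

end

/-! ### Partitions of the Frobenius group -/

section
variable {G : Type*} [Group G] {H K : Subgroup G}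

/-- A nontrivial element of the complement commutes with no nontrivial element of the kernel. -/
theorem eq_one_of_commute (hfrob : ∀ g : G, g ∉ H → ∀ x ∈ H, g * x * g⁻¹ ∈ H → x = 1)
    (hKH : K ⊓ H = ⊥) {h k : G} (hh : h ∈ H) (h1 : h ≠ 1) (hk : k ∈ K) (hc : k * h * k⁻¹ = h) :
    k = 1 := by
  have hkH : k ∈ H := by
    by_contra hkH
    exact h1 (hfrob k hkH h hh (hc.symm ▸ hh))
  have : k ∈ K ⊓ H := ⟨hk, hkH⟩
  rwa [hKH, Subgroup.mem_bot] at this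

/-- Every element outside the kernel is conjugate into the complement by an element of the kernel,
since `k ↦ k h k⁻¹ h⁻¹` is a bijection of `K` for `1 ≠ h ∈ H`. -/
theorem exists_conj_mem [Finite G]
    (hfrob : ∀ g : G, g ∉ H → ∀ x ∈ H, g * x * g⁻¹ ∈ H → x = 1)
    (hKn : K.Normal) (hKH : K ⊓ H = ⊥) (hprod : (K : Set G) * (H : Set G) = Set.univ)
    {g : G} (hg : g ∉ K) : ∃ k ∈ K, k⁻¹ * g * k ∈ H := by
  obtain ⟨a, ha, h, hh, rfl⟩ : g ∈ (K : Set G) * (H : Set G) := hprod ▸ Set.mem_univ g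
  have h1 : h ≠ 1 := by
    rintro rfl
    exact hg (by simpa using ha)
  let f : K → K := fun k => ⟨k * (h * (k : G)⁻¹ * h⁻¹),
    K.mul_mem k.2 (hKn.conj_mem _ (K.inv_mem k.2) h)⟩
  have hf : Function.Injective f := by
    intro k l hkl
    have e : (k : G) * (h * (k : G)⁻¹ * h⁻¹) = l * (h * (l : G)⁻¹ * h⁻¹) :=
      congrArg Subtype.val hkl
    have e2 : (l : G)⁻¹ * k * h * ((l : G)⁻¹ * k)⁻¹ = h := by
      calc (l : G)⁻¹ * k * h * ((l : G)⁻¹ * k)⁻¹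
          = (l : G)⁻¹ * (k * (h * (k : G)⁻¹ * h⁻¹)) * h * l := by group
        _ = _ := by rw [e]; group
    have e3 := eq_one_of_commute hfrob hKH hh h1 (K.mul_mem (K.inv_mem l.2) k.2) e2
    exact (Subtype.ext (inv_mul_eq_one.1 e3)).symm
  obtain ⟨k, hk⟩ := Finite.surjective_of_injective hf ⟨a, ha⟩
  have e : (k : G) * (h * (k : G)⁻¹ * h⁻¹) = a := congrArg Subtype.val hk
  refine ⟨k, k.2, ?_⟩
  have : (k : G)⁻¹ * (a * h) * k = h := by rw [← e]; group
  change (k : G)⁻¹ * (a * h) * k ∈ H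
  rw [this]; exact hh

/-- The kernel together with the conjugates of the complement is a partition. -/
theorem exists_partition [Finite G] (hbot : H ≠ ⊥) (htop : H ≠ ⊤)
    (hfrob : ∀ g : G, g ∉ H → ∀ x ∈ H, g * x * g⁻¹ ∈ H → x = 1)
    (hKn : K.Normal) (hKH : K ⊓ H = ⊥) (hprod : (K : Set G) * (H : Set G) = Set.univ) :
    ∃ P : Finset (Subgroup G), IsPartitionOf P ∧ P.card ≤ Nat.card K + 1 := by
  classical
  let := Fintype.ofFinite K
  have hmem : ∀ k g : G, g ∈ H.map (MulAut.conj k).toMonoidHom ↔ k⁻¹ * g * k ∈ H := by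
    intro k g
    constructor
    · rintro ⟨h, hh, rfl⟩
      simpa [MulAut.conj_apply, mul_assoc] using hh
    · intro h
      exact ⟨_, h, by simp [MulAut.conj_apply, mul_assoc]⟩
  have hKc : ∀ k, K ⊓ H.map (MulAut.conj k).toMonoidHom = ⊥ := by
    intro k
    rw [Subgroup.eq_bot_iff_forall]
    rintro x ⟨hx, hx2⟩
    replace hx2 := (hmem _ _).1 hx2
    have h2 : k⁻¹ * x * k ∈ K ⊓ H := ⟨by simpa using hKn.conj_mem x hx k⁻¹, hx2⟩
    rw [hKH, Subgroup.mem_bot] at h2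
    have h3 : x = k * (k⁻¹ * x * k) * k⁻¹ := by group
    rw [h3, h2]; simp
  have hHH : ∀ k l, H.map (MulAut.conj k).toMonoidHom ≠ H.map (MulAut.conj l).toMonoidHom →
      H.map (MulAut.conj k).toMonoidHom ⊓ H.map (MulAut.conj l).toMonoidHom = ⊥ := by
    intro k l hne
    rw [Subgroup.eq_bot_iff_forall]
    rintro x ⟨hx, hx2⟩
    replace hx := (hmem _ _).1 hx
    replace hx2 := (hmem _ _).1 hx2
    by_cases hkl : l⁻¹ * k ∈ H
    · refine absurd ?_ hne
      ext y
      rw [hmem, hmem]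
      have e : l⁻¹ * y * l = (l⁻¹ * k) * (k⁻¹ * y * k) * (l⁻¹ * k)⁻¹ := by group
      rw [e, H.mul_mem_cancel_right (H.inv_mem hkl), H.mul_mem_cancel_left hkl]
    · have h3 := hfrob _ hkl _ hx (by
        have e : l⁻¹ * x * l = (l⁻¹ * k) * (k⁻¹ * x * k) * (l⁻¹ * k)⁻¹ := by group
        rwa [← e])
      have h4 : x = k * (k⁻¹ * x * k) * k⁻¹ := by group
      rw [h4, h3]; simp
  refine ⟨insert K (univ.image fun k : K => H.map (MulAut.conj (k : G)).toMonoidHom),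
    ⟨⟨?_, ?_⟩, ?_⟩, ?_⟩
  · intro L hL h
    subst h
    rcases mem_insert.1 hL with h | h
    · rw [← h, top_inf_eq] at hKH
      exact hbot hKH
    · obtain ⟨k, -, hk⟩ := mem_image.1 h
      refine htop ((Subgroup.eq_top_iff' H).2 fun x => ?_)
      have : (k : G) * x * (k : G)⁻¹ ∈ H.map (MulAut.conj (k : G)).toMonoidHom := by
        rw [hk]; trivial
      rw [hmem] at this
      simpa [mul_assoc] using this
  · intro g
    by_cases hg : g ∈ K
    · exact ⟨K, mem_insert_self _ _, hg⟩
    · obtain ⟨k, hk, h⟩ := exists_conj_mem hfrob hKn hKH hprod hg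
      exact ⟨_, mem_insert_of_mem (mem_image.2 ⟨⟨k, hk⟩, mem_univ _, rfl⟩), (hmem _ _).2 h⟩
  · intro A hA B hB hAB
    rcases mem_insert.1 hA with rfl | hA <;> rcases mem_insert.1 hB with rfl | hB
    · exact absurd rfl hAB
    · obtain ⟨k, -, rfl⟩ := mem_image.1 hB
      exact hKc k
    · obtain ⟨k, -, rfl⟩ := mem_image.1 hA
      rw [inf_comm]; exact hKc k
    · obtain ⟨k, -, rfl⟩ := mem_image.1 hA
      obtain ⟨l, -, rfl⟩ := mem_image.1 hB
      exact hHH k l hAB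
  · refine (card_insert_le _ _).trans (Nat.add_le_add_right (card_image_le.trans ?_) 1)
    rw [card_univ, Nat.card_eq_fintype_card]

/-- If the kernel is not commutative, it lies in each member of a partition that meets it
nontrivially. By minimality the kernel is perfect, so `IsInvPart.exists_eq_top` applies to the
common refinement of the conjugates of the partition. -/
theorem le_of_inf_ne_bot [Finite G]
    (hfrob : ∀ g : G, g ∉ H → ∀ x ∈ H, g * x * g⁻¹ ∈ H → x = 1)
    (hKn : K.Normal) (hKH : K ⊓ H = ⊥)
    (hmin : K ≠ ⊥ ∧ ∀ N : Subgroup G, N.Normal → N ≤ K → N ≠ ⊥ → N = K)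
    {h₀ : G} (hh₀ : h₀ ∈ H) (hh₀1 : h₀ ≠ 1)
    (hnc : ¬ ∀ x ∈ K, ∀ y ∈ K, x * y = y * x)
    {P : Finset (Subgroup G)} (hP : IsPartitionOf P) {A : Subgroup G} (hA : A ∈ P)
    (hAK : A ⊓ K ≠ ⊥) : K ≤ A := by
  have hcoe : ∀ i (x : K), (((MulAut.conjNormal h₀ ^ i : MulAut K) x : K) : G)
      = h₀ ^ i * x * (h₀ ^ i)⁻¹ := by
    intro i x
    rw [← map_pow, MulAut.conjNormal_apply]
  have hσ : IsFPF (MulAut.conjNormal h₀ : MulAut K) (orderOf h₀) := by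
    refine ⟨?_, ?_, ?_⟩
    · have h1 := orderOf_pos h₀
      have h2 := mt orderOf_eq_one_iff.1 hh₀1
      omega
    · rw [← map_pow, pow_orderOf_eq_one, map_one]
    · intro i hi hin x hx
      have h1 : h₀ ^ i ≠ 1 := pow_ne_one_of_lt_orderOf hi.ne' hin
      have h2 := congrArg Subtype.val hx
      rw [hcoe] at h2
      refine Subtype.ext (eq_one_of_commute hfrob hKH (H.pow_mem hh₀ i) h1 x.2 ?_)
      rw [mul_inv_eq_iff_eq_mul] at h2 ⊢
      exact h2.symm
  have huniq : ∀ x : G, x ≠ 1 → ∀ B ∈ P, ∀ B' ∈ P, x ∈ B → x ∈ B' → B = B' := by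
    intro x hx B hB B' hB' h h'
    by_contra hne
    have : x ∈ B ⊓ B' := ⟨h, h'⟩
    rw [hP.2 B hB B' hB' hne, Subgroup.mem_bot] at this
    exact hx this
  -- the common refinement of all conjugates of the partition, restricted to the kernel
  let C : K → Subgroup K := fun x =>
    { carrier := {y | ∀ g : G, ∀ B ∈ P, g * x * g⁻¹ ∈ B → g * y * g⁻¹ ∈ B}
      one_mem' := fun g B _ _ => by simp
      mul_mem' := fun {a b} ha hb g B hB hx => by
        have := B.mul_mem (ha g B hB hx) (hb g B hB hx)
        simpa [mul_assoc] using this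
      inv_mem' := fun {a} ha g B hB hx => by
        have := B.inv_mem (ha g B hB hx)
        simpa [mul_assoc] using this }
  have hmem : ∀ x y : K, y ∈ C x ↔ ∀ g : G, ∀ B ∈ P, g * x * g⁻¹ ∈ B → g * y * g⁻¹ ∈ B :=
    fun x y => Iff.rfl
  have hne1 : ∀ (g : G) (x : K), x ≠ 1 → g * x * g⁻¹ ≠ 1 := by
    intro g x hx h
    exact hx (Subtype.ext (conj_eq_one_iff.1 h))
  have hconj : ∀ (a : G) (x y x' y' : K), (x' : G) = a * x * a⁻¹ → (y' : G) = a * y * a⁻¹ →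
      y ∈ C x → y' ∈ C x' := by
    intro a x y x' y' hx hy h
    rw [hmem] at h ⊢
    intro g B hB hg
    have := h (g * a) B hB (by rw [hx] at hg; simpa [mul_assoc] using hg)
    rw [hy]; simpa [mul_assoc] using this
  have hC : IsInvPart (MulAut.conjNormal h₀ : MulAut K) C := by
    refine ⟨fun x g B _ h => h, ?_, ?_, ?_⟩
    · intro x y hx hy hxy
      ext z
      rw [hmem, hmem]
      refine forall_congr' fun g => forall_congr' fun B => forall_congr' fun hB => ?_
      have h1 : g * x * g⁻¹ ∈ B ↔ g * y * g⁻¹ ∈ B := by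
        refine ⟨hxy g B hB, fun h => ?_⟩
        obtain ⟨B', hB', h'⟩ := hP.1.2 (g * x * g⁻¹)
        have := huniq _ (hne1 g y hy) B hB B' hB' h (hxy g B' hB' h')
        rwa [this]
      rw [h1]
    · intro g x y h
      exact hconj g x y _ _ (by simp) (by simp) h
    · intro x y h
      exact hconj h₀ x y _ _ (MulAut.conjNormal_apply _ _) (MulAut.conjNormal_apply _ _) h
  have hnt : Nontrivial K := (Subgroup.nontrivial_iff_ne_bot K).2 hmin.1
  have hperf : commutator K = ⊤ := by
    have h1 : ⁅K, K⁆ = K := by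
      refine hmin.2 _ inferInstance (Subgroup.commutator_le_left K K) fun h => hnc ?_
      intro x hx y hy
      rw [Subgroup.commutator_eq_bot_iff_le_centralizer] at h
      exact (Subgroup.mem_centralizer_iff.1 (h hx) y hy).symm
    apply Subgroup.map_injective K.subtype_injective
    rw [commutator_def, Subgroup.map_commutator, ← MonoidHom.range_eq_map, Subgroup.range_subtype,
      h1]
  obtain ⟨x, hx, hCx⟩ := hC.exists_eq_top hσ hperf
  obtain ⟨y, hy, hy1⟩ : ∃ y ∈ A ⊓ K, y ≠ 1 := (Subgroup.bot_or_exists_ne_one _).resolve_left hAK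
  have hCy : C ⟨y, hy.2⟩ = ⊤ := by
    rw [← hCx]
    refine hC.eq_of_mem _ _ hx (fun h => hy1 (congrArg Subtype.val h)) ?_
    rw [hCx]; trivial
  intro z hz
  have hzC : (⟨z, hz⟩ : K) ∈ C ⟨y, hy.2⟩ := by rw [hCy]; trivial
  have := hzC 1 A hA (by simpa using hy.1)
  simpa using this

/-- A member of a partition containing a conjugate of the complement meets the kernel
trivially: otherwise it would contain the kernel, hence be the whole group. For a commutative
kernel this is because the intersection would be normal. -/
theorem inf_eq_bot_of_conj_mem [Finite G]
    (hfrob : ∀ g : G, g ∉ H → ∀ x ∈ H, g * x * g⁻¹ ∈ H → x = 1)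
    (hKn : K.Normal) (hKH : K ⊓ H = ⊥) (hprod : (K : Set G) * (H : Set G) = Set.univ)
    (hmin : K ≠ ⊥ ∧ ∀ N : Subgroup G, N.Normal → N ≤ K → N ≠ ⊥ → N = K)
    {h₀ : G} (hh₀ : h₀ ∈ H) (hh₀1 : h₀ ≠ 1)
    {P : Finset (Subgroup G)} (hP : IsPartitionOf P) {A : Subgroup G} (hA : A ∈ P)
    {k : G} (hk : k ∈ K) (hkA : ∀ h ∈ H, k * h * k⁻¹ ∈ A) : A ⊓ K = ⊥ := by
  by_contra hAK
  have hdec : ∀ g : G, ∃ a ∈ K, ∃ b ∈ A, g = a * b := by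
    intro g
    obtain ⟨a, ha, h, hh, hah⟩ : k⁻¹ * g * k ∈ (K : Set G) * (H : Set G) :=
      hprod ▸ Set.mem_univ _
    have e : a * h = k⁻¹ * g * k := hah
    refine ⟨k * a * k⁻¹, K.mul_mem (K.mul_mem hk ha) (K.inv_mem hk), _, hkA h hh, ?_⟩
    calc g = k * (k⁻¹ * g * k) * k⁻¹ := by group
      _ = _ := by rw [← e]; group
  have hKA : K ≤ A := by
    by_cases hc : ∀ x ∈ K, ∀ y ∈ K, x * y = y * x
    · have hN : (A ⊓ K).Normal := by
        refine ⟨fun x hx g => ?_⟩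
        obtain ⟨a, ha, b, hb, rfl⟩ := hdec g
        have hxb : b * x * b⁻¹ ∈ A ⊓ K :=
          ⟨A.mul_mem (A.mul_mem hb hx.1) (A.inv_mem hb), hKn.conj_mem x hx.2 b⟩
        have e : a * b * x * (a * b)⁻¹ = b * x * b⁻¹ := by
          calc a * b * x * (a * b)⁻¹ = a * (b * x * b⁻¹) * a⁻¹ := by group
            _ = _ := by rw [hc a ha _ hxb.2]; group
        rw [e]; exact hxb
      rw [← hmin.2 _ hN inf_le_right hAK]
      exact inf_le_left
    · exact le_of_inf_ne_bot hfrob hKn hKH hmin hh₀ hh₀1 hc hP hA hAK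
  refine hP.1.1 A hA ((Subgroup.eq_top_iff' A).2 fun g => ?_)
  obtain ⟨a, ha, b, hb, rfl⟩ := hdec g
  exact A.mul_mem (hKA ha) hb

/-- The members containing the conjugates of a generator of `H` are pairwise distinct, and none of
them contains a nontrivial element of the kernel. -/
theorem card_le_of_isPartitionOf [Finite G] (hbot : H ≠ ⊥)
    (hfrob : ∀ g : G, g ∉ H → ∀ x ∈ H, g * x * g⁻¹ ∈ H → x = 1)
    (hKn : K.Normal) (hKH : K ⊓ H = ⊥) (hprod : (K : Set G) * (H : Set G) = Set.univ)
    (hmin : K ≠ ⊥ ∧ ∀ N : Subgroup G, N.Normal → N ≤ K → N ≠ ⊥ → N = K)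
    (hcyc : IsCyclic H) {P : Finset (Subgroup G)} (hP : IsPartitionOf P) :
    Nat.card K + 1 ≤ P.card := by
  classical
  let := Fintype.ofFinite K
  obtain ⟨⟨h₀, hh₀⟩, hgen⟩ := hcyc.exists_generator
  have hgen' : ∀ h ∈ H, ∃ i : ℤ, h₀ ^ i = h := by
    intro h hh
    obtain ⟨i, hi⟩ := hgen ⟨h, hh⟩
    exact ⟨i, congrArg Subtype.val hi⟩
  have hh₀1 : h₀ ≠ 1 := by
    rintro rfl
    refine hbot ((Subgroup.eq_bot_iff_forall _).2 fun h hh => ?_)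
    obtain ⟨i, rfl⟩ := hgen' h hh
    exact one_zpow i
  choose A hA hkA using fun k : K => hP.1.2 ((k : G) * h₀ * (k : G)⁻¹)
  have hAK : ∀ k, A k ⊓ K = ⊥ := by
    intro k
    refine inf_eq_bot_of_conj_mem hfrob hKn hKH hprod hmin hh₀ hh₀1 hP (hA k) k.2 ?_
    intro h hh
    obtain ⟨i, rfl⟩ := hgen' h hh
    rw [← conj_zpow]
    exact (A k).zpow_mem (hkA k) i
  have hinj : Function.Injective A := by
    intro k l hkl
    have h1 : ((k : G) * h₀ * (k : G)⁻¹) * ((l : G) * h₀ * (l : G)⁻¹)⁻¹ ∈ A k ⊓ K := by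
      refine ⟨(A k).mul_mem (hkA k) ((A k).inv_mem (hkl ▸ hkA l)), ?_⟩
      have e : ((k : G) * h₀ * (k : G)⁻¹) * ((l : G) * h₀ * (l : G)⁻¹)⁻¹
          = k * (h₀ * ((k : G)⁻¹ * l) * h₀⁻¹) * (l : G)⁻¹ := by group
      rw [e]
      exact K.mul_mem (K.mul_mem k.2
        (hKn.conj_mem _ (K.mul_mem (K.inv_mem k.2) l.2) h₀)) (K.inv_mem l.2)
    rw [hAK, Subgroup.mem_bot, mul_inv_eq_one] at h1
    have h2 : ((l : G)⁻¹ * k) * h₀ * ((l : G)⁻¹ * k)⁻¹ = h₀ := by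
      calc ((l : G)⁻¹ * k) * h₀ * ((l : G)⁻¹ * k)⁻¹
          = (l : G)⁻¹ * ((k : G) * h₀ * (k : G)⁻¹) * l := by group
        _ = _ := by rw [h1]; group
    have h3 := eq_one_of_commute hfrob hKH hh₀ hh₀1 (K.mul_mem (K.inv_mem l.2) k.2) h2
    exact (Subtype.ext (inv_mul_eq_one.1 h3)).symm
  -- one further member is needed for the nontrivial elements of the kernel
  obtain ⟨x, hxK, hx⟩ := K.bot_or_exists_ne_one.resolve_left hmin.1
  obtain ⟨B, hB, hxB⟩ := hP.1.2 x
  have hBA : B ∉ univ.image A := by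
    intro h
    obtain ⟨k, -, rfl⟩ := mem_image.1 h
    have : x ∈ A k ⊓ K := ⟨hxB, hxK⟩
    rw [hAK, Subgroup.mem_bot] at this
    exact hx this
  have hsub : insert B (univ.image A) ⊆ P := by
    intro L hL
    rcases mem_insert.1 hL with rfl | hL
    · exact hB
    · obtain ⟨k, -, rfl⟩ := mem_image.1 hL
      exact hA k
  have h1 := card_le_card hsub
  rwa [card_insert_of_notMem hBA, card_image_of_injective _ hinj, card_univ,
    ← Nat.card_eq_fintype_card] at h1

end

end

theorem frobenius_rho_eq (G : Type*) [Group G] [Finite G] (H K : Subgroup G)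
    (hbot : H ≠ ⊥) (htop : H ≠ ⊤)
    (hfrob : ∀ g : G, g ∉ H → ∀ x ∈ H, g * x * g⁻¹ ∈ H → x = 1)
    (hKn : K.Normal) (hKH : K ⊓ H = ⊥)
    (hprod : (K : Set G) * (H : Set G) = Set.univ)
    (hmin : K ≠ ⊥ ∧ ∀ N : Subgroup G, N.Normal → N ≤ K → N ≠ ⊥ → N = K)
    (hcyc : IsCyclic H) :
    rhoG G = Nat.card K + 1 := by
  obtain ⟨P, hP, hcard⟩ := exists_partition hbot htop hfrob hKn hKH hprod
  have hle : rhoG G ≤ P.card := Nat.sInf_le ⟨P, hP, rfl⟩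
  refine le_antisymm (hle.trans hcard) ?_
  refine le_csInf ⟨P.card, P, hP, rfl⟩ ?_
  rintro _ ⟨Q, hQ, rfl⟩
  exact card_le_of_isPartitionOf hbot hfrob hKn hKH hprod hmin hcyc hQ
end

section
/- Let p be a prime and let G be a finite group of Hughes-Thompson type relative to p, i.e. G is not a p-group and H_p(G) ≠ G, where H_p(G) is the subgroup of G generated by all elements whose order is not p (equivalently, by all x with x^p ≠ 1). Assume G is not a Frobenius group. Then H_p(G) is a member of every partition of G, and ρ(G) = |H_p(G)| + 1. -/
/-!
Write `M` for a normal subgroup of index `p` containing `H_p(G)`; it exists because `G / H_p(G)` is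
a nontrivial group of exponent `p`. Every element outside `M` has order `p`. The core of the proof
is that the `p`-elements of `M` commute with the elements of `G` of order prime to `p`
(`conj_eq_of_prime_to`). It is proved for any proper normal subgroup `H` such that all
elements outside `H` have order dividing `p`, in two steps.

First, `G` has a normal `p`-complement `K` (`exists_subgroup_prime_to`). A `p`-subgroup not contained
in `H` has a `p`-group as its normalizer, so an element outside `H` lies in a unique Sylow subgroup
`S`. The transfer from `G` to a quotient of `S` of order `p` therefore restricts on `S` to the
projection, and one descends to its kernel.

Second, let `r ∉ H` normalize `A ≤ H`, and let `V ≤ H` be abelian, normal and of order prime to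
`|A|`. The relations `(v a r) ^ p = (a r) ^ p = 1` say that every `v ∈ V` has trivial norm under
every `a r`. Multiplying these relations over `a ∈ A` gives `v ^ |A| = ∏_{a ∈ A} a • v`, which is
fixed by `A`, so `A` centralizes `V` (`smul_eq_of_coprime`). An induction on the upper central series
replaces `V` by any normal `q`-subgroup with `q ≠ p`, and this is applied to the Sylow subgroups of
`K` stable under a given Sylow `p`-subgroup of `G`.

Consequently `M = H_p(G)`: if `m ∈ M` has `m ^ p = 1` and `y ≠ 1` has order prime to `p`, then
`m = (m y) y⁻¹` with `(m y) ^ p ≠ 1` and `y ^ p ≠ 1`. If `p ∤ |M|`, then `G` is a Frobenius group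
with a complement of order `p`. Otherwise, two commuting nontrivial elements of coprime orders lie in
the same component of a partition, so one component contains `M`, and it equals `M` because the index
is prime. The other components then have order at most `p` and cover the `(p - 1) |M|` elements
outside `M`, so there are at least `|M|` of them. Equality holds for the partition formed by `M` and
the subgroups of order `p` outside `M`.
-/

open Pointwise

/-! ### Transfer and the normal `p`-complement -/

/-- If `r ^ p = 1` and the only conjugates of `r` inside `S` are those by elements of `S`, then the
transfer sends `r ∈ S` to its image: `r` fixes exactly one coset of `S`, and every other
`⟨r⟩`-orbit on `G ⧸ S` has length `p` and contributes a conjugate of `r ^ p = 1`. -/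
theorem transfer_eq_of_isolated {G : Type*} [Group G] [Finite G] {p : ℕ} (hp : p.Prime)
    {S : Subgroup G} {A : Type*} [CommGroup A] (ϕ : S →* A) (r : G) (hrS : r ∈ S)
    (hrp : r ^ p = 1) (hiso : ∀ x : G, x⁻¹ * r * x ∈ S → x ∈ S) :
    ϕ.transfer r = ϕ ⟨r, hrS⟩ := by
  classical
  have : Fintype (Quotient (MulAction.orbitRel (Subgroup.zpowers r) (G ⧸ S))) :=
    Fintype.ofFinite _
  rw [MonoidHom.transfer_eq_prod_quotient_orbitRel_zpowers_quot]
  -- a coset fixed by `r` is the trivial one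
  have hfix : ∀ q : G ⧸ S, r • q = q → q = ((1 : G) : G ⧸ S) := by
    intro q
    induction q using QuotientGroup.induction_on with
    | H x =>
      intro h
      rw [MulAction.Quotient.smul_coe, eq_comm, QuotientGroup.eq] at h
      have hx : x ∈ S := hiso x (by simpa [mul_assoc] using h)
      rw [QuotientGroup.eq]
      simpa using hx
  have hone : r • ((1 : G) : G ⧸ S) = ((1 : G) : G ⧸ S) := by
    rw [MulAction.Quotient.smul_coe, eq_comm, QuotientGroup.eq]
    simpa using hrS
  set q₀ : Quotient (MulAction.orbitRel (Subgroup.zpowers r) (G ⧸ S)) :=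
    Quotient.mk _ ((1 : G) : G ⧸ S) with hq₀
  have hq₀out : q₀.out = ((1 : G) : G ⧸ S) := by
    have h : MulAction.orbitRel (Subgroup.zpowers r) (G ⧸ S) q₀.out ((1 : G) : G ⧸ S) :=
      Quotient.mk_out (s := MulAction.orbitRel (Subgroup.zpowers r) (G ⧸ S)) ((1 : G) : G ⧸ S)
    rw [MulAction.orbitRel_apply] at h
    obtain ⟨⟨g, hg⟩, h⟩ := h
    rw [← h]
    have hst : Subgroup.zpowers r ≤ MulAction.stabilizer G ((1 : G) : G ⧸ S) := by
      rw [Subgroup.zpowers_le]; exact hone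
    exact hst hg
  have hper : ∀ q : G ⧸ S, Function.minimalPeriod (fun x => r • x) q = 1 ∨
      Function.minimalPeriod (fun x => r • x) q = p := by
    intro q
    refine (Nat.dvd_prime hp).1 (Function.IsPeriodicPt.minimalPeriod_dvd ?_)
    have : ∀ n, (fun x : G ⧸ S => r • x)^[n] q = r ^ n • q := fun n => by
      rw [smul_iterate]
    rw [Function.IsPeriodicPt, Function.IsFixedPt, this, hrp, one_smul]
  rw [Finset.prod_eq_single q₀]
  · have hxS : q₀.out.out ∈ S := by
      have h : ((Quotient.out q₀.out : G) : G ⧸ S) = ((1 : G) : G ⧸ S) := by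
        rw [← hq₀out]; exact Quotient.out_eq _
      rw [eq_comm, QuotientGroup.eq] at h
      simpa using h
    have hp1 : Function.minimalPeriod (fun x => r • x) q₀.out = 1 := by
      rw [Function.minimalPeriod_eq_one_iff_isFixedPt, hq₀out]
      exact hone
    have : (⟨q₀.out.out⁻¹ * r ^ Function.minimalPeriod (fun x => r • x) q₀.out * q₀.out.out,
        QuotientGroup.out_conj_pow_minimalPeriod_mem S r q₀.out⟩ : S) =
        (⟨q₀.out.out, hxS⟩ : S)⁻¹ * ⟨r, hrS⟩ * ⟨q₀.out.out, hxS⟩ := by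
      ext; simp [hp1]
    rw [this]
    simp [mul_comm]
  · intro q _ hq
    rcases hper q.out with h | h
    · exfalso
      rw [Function.minimalPeriod_eq_one_iff_isFixedPt] at h
      have := hfix _ h
      exact hq (by rw [hq₀, ← this]; exact (Quotient.out_eq q).symm)
    · rw [← map_one ϕ]
      congr 1
      ext
      simp [h, hrp]
  · simp

/-- An element `y` of prime order `q ≠ p` normalizing a `p`-subgroup that is not contained in `H`
would commute, by counting, with an element `x ∉ H` of that subgroup, and then
`(y x) ^ p = x ^ p = 1` gives `y ^ p = 1`. -/
theorem isPGroup_normalizer {G : Type*} [Group G] [Finite G] {p : ℕ} (hp : p.Prime)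
    (H : Subgroup G) [H.Normal] (hH : ∀ x, x ∉ H → x ^ p = 1) (D : Subgroup G)
    (hD : IsPGroup p D) (r : G) (hrD : r ∈ D) (hrH : r ∉ H) :
    IsPGroup p (Subgroup.normalizer (D : Set G)) := by
  classical
  have := Fact.mk hp
  refine IsPGroup.of_card (Nat.eq_prime_pow_of_unique_prime_dvd Nat.card_pos.ne' ?_)
  intro q hq hdvd
  by_contra hqp
  have := Fact.mk hq
  obtain ⟨⟨y, hyN⟩, hy⟩ := exists_prime_orderOf_dvd_card' q hdvd
  rw [Subgroup.orderOf_mk] at hy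
  have hyp : y ^ p ≠ 1 := fun h => by
    have := orderOf_dvd_of_pow_eq_one h
    rw [hy] at this
    exact hqp ((Nat.prime_dvd_prime_iff_eq hq hp).1 this)
  have hyH : y ∈ H := by
    by_contra h
    exact hyp (hH y h)
  let X := {x : G // x ∈ D ∧ x * r⁻¹ ∈ H}
  have : Fintype X := Fintype.ofFinite X
  have hcard : Fintype.card X = Nat.card (D ⊓ H : Subgroup G) := by
    rw [← Nat.card_eq_fintype_card]
    refine Nat.card_congr
      ⟨fun x => ⟨x.1 * r⁻¹, D.mul_mem x.2.1 (D.inv_mem hrD), x.2.2⟩,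
        fun x => ⟨x.1 * r, D.mul_mem x.2.1 hrD, by simpa using x.2.2⟩, ?_, ?_⟩
    · intro x; simp
    · intro x; simp
  have hqX : ¬ q ∣ Fintype.card X := by
    rw [hcard]
    obtain ⟨n, hn⟩ := IsPGroup.iff_card.1 (hD.to_le (inf_le_left : D ⊓ H ≤ D))
    rw [hn]
    intro h
    exact hqp ((Nat.prime_dvd_prime_iff_eq hq hp).1 (hq.dvd_of_dvd_pow h))
  have hmem : ∀ x : G, x ∈ D ∧ x * r⁻¹ ∈ H → (y * x * y⁻¹) ∈ D ∧ (y * x * y⁻¹) * r⁻¹ ∈ H := by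
    rintro x ⟨hx, hxr⟩
    refine ⟨(Subgroup.mem_normalizer_iff.1 hyN x).1 hx, ?_⟩
    have h1 : x * y⁻¹ * x⁻¹ ∈ H := ‹H.Normal›.conj_mem _ (H.inv_mem hyH) x
    have : y * x * y⁻¹ * r⁻¹ = y * (x * y⁻¹ * x⁻¹) * (x * r⁻¹) := by group
    rw [this]
    exact H.mul_mem (H.mul_mem hyH h1) hxr
  let f : Function.End X := fun x => ⟨y * x.1 * y⁻¹, hmem x.1 x.2⟩
  have hf : ∀ n : ℕ, ∀ x : X, ((f ^ n) x).1 = y ^ n * x.1 * (y ^ n)⁻¹ := by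
    intro n
    induction n with
    | zero => intro x; rw [pow_zero, pow_zero, one_mul, inv_one, mul_one]; rfl
    | succ n ih =>
      intro x
      rw [pow_succ]
      change ((f ^ n) (f x)).1 = _
      rw [ih]
      simp only [f]
      group
  have hfq : f ^ q ^ 1 = 1 := by
    funext x
    apply Subtype.ext
    rw [hf, pow_one, ← hy, pow_orderOf_eq_one, one_mul, inv_one, mul_one]
    rfl
  have hmod := Equiv.Perm.card_fixedPoints_modEq hfq
  have hne : Fintype.card (Function.fixedPoints f) ≠ 0 := by
    intro h
    rw [h] at hmod
    exact hqX ((Nat.modEq_zero_iff_dvd).1 hmod)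
  obtain ⟨⟨x, hx⟩⟩ := Fintype.card_pos_iff.1 (Nat.pos_of_ne_zero hne)
  have hxy : y * x.1 * y⁻¹ = x.1 := congrArg Subtype.val hx
  have hcomm : Commute y x.1 := by
    rw [commute_iff_eq]
    exact mul_inv_eq_iff_eq_mul.1 hxy
  have hxH : x.1 ∉ H := by
    intro h
    apply hrH
    have := H.mul_mem (H.inv_mem x.2.2) h
    simpa using this
  have h1 := hH _ hxH
  have h2 : (y * x.1) ^ p = 1 := hH _ fun h => hxH ((H.mul_mem_cancel_left hyH).1 h)
  rw [hcomm.mul_pow, h1, mul_one] at h2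
  exact hyp h2

/-- Two Sylow `p`-subgroups sharing an element outside `H` coincide: the normalizer of their
intersection is a `p`-group, so a Sylow subgroup above it meets each of them in something
strictly larger. -/
theorem sylow_unique {G : Type*} [Group G] [Finite G] {p : ℕ} (hp : p.Prime)
    (H : Subgroup G) [H.Normal] (hH : ∀ x, x ∉ H → x ^ p = 1) (r : G) (hrH : r ∉ H) :
    ∀ (n : ℕ) (S T : Sylow p G), r ∈ S → r ∈ T →
      Nat.card G - Nat.card ((S : Subgroup G) ⊓ T : Subgroup G) = n → S = T := by
  have := Fact.mk hp
  intro n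
  induction n using Nat.strong_induction_on with
  | _ n ih =>
  intro S T hrS hrT hn
  by_contra hne
  set D : Subgroup G := (S : Subgroup G) ⊓ T with hDdef
  have hDp : IsPGroup p D := S.isPGroup'.to_le inf_le_left
  have hrD : r ∈ D := ⟨hrS, hrT⟩
  have hN := isPGroup_normalizer hp H hH D hDp r hrD hrH
  obtain ⟨U, hU⟩ := hN.exists_le_sylow
  have hDU : D ≤ U := Subgroup.le_normalizer.trans hU
  -- if `D` is properly contained in a Sylow subgroup `V`, then `V` agrees with `U`
  have key : ∀ V : Sylow p G, D ≤ V → D ≠ V → V = U := by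
    intro V hDV hDne
    have hVp : IsPGroup p (V : Subgroup G) := V.isPGroup'
    have hnil : Group.IsNilpotent (V : Subgroup G) := hVp.isNilpotent
    have hlt : D.subgroupOf V < ⊤ := by
      rw [lt_top_iff_ne_top, Ne, Subgroup.subgroupOf_eq_top]
      exact fun h => hDne (le_antisymm hDV h)
    obtain ⟨x, hx, hxD⟩ := SetLike.exists_of_lt (Group.normalizerCondition_of_isNilpotent _ hlt)
    have hxN : (x : G) ∈ Subgroup.normalizer (D : Set G) := by
      rw [Subgroup.mem_normalizer_iff]
      rw [Subgroup.mem_normalizer_iff] at hx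
      intro h
      constructor
      · intro hh
        exact (hx ⟨h, hDV hh⟩).1 hh
      · intro hh
        have h1 : x.1⁻¹ * (x.1 * h * x.1⁻¹) * x.1 ∈ (V : Subgroup G) :=
          V.mul_mem (V.mul_mem (V.inv_mem x.2) (hDV hh)) x.2
        have h2 : h ∈ (V : Subgroup G) := by
          have : x.1⁻¹ * (x.1 * h * x.1⁻¹) * x.1 = h := by group
          rwa [this] at h1
        exact (hx ⟨h, h2⟩).2 hh
    have hDlt : D < (V : Subgroup G) ⊓ U := by
      refine lt_of_le_of_ne (le_inf hDV hDU) fun h => hxD ?_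
      rw [Subgroup.mem_subgroupOf, h]
      exact ⟨x.2, hU hxN⟩
    have hc : Nat.card D < Nat.card ((V : Subgroup G) ⊓ U : Subgroup G) := by
      refine lt_of_le_of_ne (Subgroup.card_le_of_le hDlt.le) fun h => hDlt.ne ?_
      exact Subgroup.eq_of_le_of_card_ge hDlt.le h.ge
    have hc' : Nat.card ((V : Subgroup G) ⊓ U : Subgroup G) ≤ Nat.card G :=
      Subgroup.card_le_card_group _
    exact ih _ (by omega) V U (hDV hrD) (hDU hrD) rfl
  have hcardST : Nat.card S = Nat.card T := by
    rw [Sylow.card_eq_multiplicity, Sylow.card_eq_multiplicity]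
  have h1 : D ≠ S := fun h => by
    have hST : (S : Subgroup G) ≤ T := h ▸ inf_le_right
    exact hne (Sylow.ext (Subgroup.eq_of_le_of_card_ge hST hcardST.ge))
  have h2 : D ≠ T := fun h => by
    have hST : (T : Subgroup G) ≤ S := h ▸ inf_le_left
    exact hne (Sylow.ext (Subgroup.eq_of_le_of_card_ge hST hcardST.le)).symm
  exact hne ((key S inf_le_left h1).trans (key T inf_le_right h2).symm)

/-- If every element outside a proper normal subgroup `H` has order dividing `p`, then the
elements of order prime to `p` form a subgroup (a normal `p`-complement). The transfer from a Sylow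
subgroup `S` to a quotient `S ⧸ T` of order `p` restricts to the projection on `S`, so its kernel
is a proper subgroup containing all these elements. If `|S| = p`, that kernel is the complement;
otherwise `T` may be chosen to contain some `r ∉ H`, and induction applies to the kernel. -/
theorem exists_subgroup_prime_to {p : ℕ} (hp : p.Prime) :
    ∀ (n : ℕ) (G : Type*) [Group G] [Finite G] (H : Subgroup G) [H.Normal],
      Nat.card G = n → H ≠ ⊤ → (∀ x, x ∉ H → x ^ p = 1) →
      ∃ K : Subgroup G, ∀ g, g ∈ K ↔ ¬ p ∣ orderOf g := by
  have := Fact.mk hp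
  intro n
  induction n using Nat.strong_induction_on with
  | _ n ih =>
  intro G _ _ H _ hn hHtop hH
  obtain ⟨r, hrH⟩ : ∃ r, r ∉ H := by
    by_contra! h
    exact hHtop ((Subgroup.eq_top_iff' H).2 h)
  have hrp : r ^ p = 1 := hH r hrH
  have hr1 : r ≠ 1 := fun h => hrH (h ▸ H.one_mem)
  have hor : orderOf r = p := orderOf_eq_prime hrp hr1
  have hzp : IsPGroup p (Subgroup.zpowers r) :=
    IsPGroup.of_card (n := 1) (by rw [Nat.card_zpowers, hor, pow_one])
  obtain ⟨S, hS⟩ := hzp.exists_le_sylow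
  have hrS : r ∈ S := hS (Subgroup.mem_zpowers r)
  have hSp : IsPGroup p (S : Subgroup G) := S.isPGroup'
  obtain ⟨k, hk⟩ : ∃ k, Nat.card (S : Subgroup G) = p ^ (k + 1) := by
    obtain ⟨k, hk⟩ := IsPGroup.iff_card.1 hSp
    cases k with
    | zero =>
      exfalso
      rw [pow_zero, Subgroup.card_eq_one] at hk
      exact hr1 (by simpa [hk] using (show r ∈ (S : Subgroup G) from hrS))
    | succ k => exact ⟨k, hk⟩
  -- a subgroup of index `p` in `S`, chosen to contain `r` unless `S = ⟨r⟩`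
  obtain ⟨T, hTcard, hTr⟩ : ∃ T : Subgroup S, Nat.card T = p ^ k ∧
      (k = 0 ∨ (⟨r, hrS⟩ : S) ∈ T) := by
    cases k with
    | zero => exact ⟨⊥, by simp, Or.inl rfl⟩
    | succ k =>
      obtain ⟨T, hT, hle⟩ := Sylow.exists_subgroup_card_pow_prime_le (G := S) p (n := 1)
        (m := k + 1) (hk ▸ pow_dvd_pow p (by omega)) (Subgroup.zpowers ⟨r, hrS⟩)
        (by rw [Nat.card_zpowers, Subgroup.orderOf_mk, hor, pow_one]) (by omega)
      exact ⟨T, hT, Or.inr (hle (Subgroup.mem_zpowers _))⟩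
  have hTidx : T.index = p := by
    have h := T.card_mul_index
    rw [hTcard, hk, pow_succ] at h
    exact Nat.eq_of_mul_eq_mul_left (pow_pos hp.pos k) h
  have hTn : T.Normal := by
    apply Subgroup.normal_of_index_eq_minFac_card
    rw [hTidx, hk, hp.pow_minFac (by omega)]
  have hquot : Nat.card (S ⧸ T) = p := hTidx
  have hcyc : IsCyclic (S ⧸ T) := isCyclic_of_prime_card hquot
  let _ : CommGroup (S ⧸ T) := IsCyclic.commGroup
  let ϕ : S →* S ⧸ T := QuotientGroup.mk' T
  let V : G →* S ⧸ T := ϕ.transfer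
  have hϕ : ∀ s : S, ϕ s = 1 ↔ s ∈ T := fun s => QuotientGroup.eq_one_iff s
  have hVp : ∀ g, V g ^ p = 1 := fun g => by
    have h := pow_card_eq_one' (x := V g)
    rwa [hquot] at h
  have hVout : ∀ s (hs : s ∈ S), s ∉ H → V s = ϕ ⟨s, hs⟩ := by
    intro s hs hsH
    refine transfer_eq_of_isolated hp ϕ s hs (hH s hsH) fun x hx => ?_
    have hmem : s ∈ x • S := by
      rw [Sylow.smul_def, ← SetLike.mem_coe, ← Sylow.coe_coe, Sylow.pointwise_smul_def,
        SetLike.mem_coe, Subgroup.mem_pointwise_smul_iff_inv_smul_mem, ← map_inv, MulAut.smul_def,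
        MulAut.conj_apply]
      simpa using hx
    have hxS := sylow_unique hp H hH s hsH _ (x • S) S hmem hs rfl
    rw [Sylow.smul_eq_iff_mem_normalizer] at hxS
    have hN := isPGroup_normalizer hp H hH S hSp s hs hsH
    have := S.is_maximal' hN Subgroup.le_normalizer
    rw [← this]
    exact hxS
  have hVS : ∀ s (hs : s ∈ S), V s = ϕ ⟨s, hs⟩ := by
    intro s hs
    by_cases hsH : s ∈ H
    · have h1 : s * r ∉ H := fun h => hrH ((H.mul_mem_cancel_left hsH).1 h)
      have h2 := hVout (s * r) (S.mul_mem hs hrS) h1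
      have h3 := hVout r hrS hrH
      have h4 : (⟨s * r, S.mul_mem hs hrS⟩ : S) = ⟨s, hs⟩ * ⟨r, hrS⟩ := rfl
      rw [h4, map_mul, map_mul, h3] at h2
      exact mul_right_cancel h2
    · exact hVout s hs hsH
  have hVker : ∀ g, ¬ p ∣ orderOf g → g ∈ V.ker := by
    intro g hg
    rw [MonoidHom.mem_ker, ← orderOf_eq_one_iff]
    have h1 : orderOf (V g) ∣ p := orderOf_dvd_of_pow_eq_one (hVp g)
    have h2 : orderOf (V g) ∣ orderOf g := orderOf_map_dvd V g
    rcases (Nat.dvd_prime hp).1 h1 with h | h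
    · exact h
    · exact absurd (h ▸ h2) hg
  by_cases hk0 : k = 0
  · -- here `S` has order `p` and the kernel of the transfer avoids it
    refine ⟨V.ker, fun g => ⟨fun hg hdvd => ?_, hVker g⟩⟩
    have hs : orderOf (g ^ (orderOf g / p)) = p :=
      orderOf_pow_orderOf_div (orderOf_pos g).ne' hdvd
    have hsp : IsPGroup p (Subgroup.zpowers (g ^ (orderOf g / p))) :=
      IsPGroup.of_card (n := 1) (by rw [Nat.card_zpowers, hs, pow_one])
    obtain ⟨U, hU⟩ := hsp.exists_le_sylow
    obtain ⟨x, hx⟩ := MulAction.exists_smul_eq G U S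
    have hsS : x * g ^ (orderOf g / p) * x⁻¹ ∈ S := by
      rw [← hx, Sylow.smul_def, ← SetLike.mem_coe, ← Sylow.coe_coe, Sylow.pointwise_smul_def,
        SetLike.mem_coe, Subgroup.mem_pointwise_smul_iff_inv_smul_mem, ← map_inv, MulAut.smul_def,
        MulAut.conj_apply]
      have := hU (Subgroup.mem_zpowers _)
      simpa [mul_assoc] using this
    have h1 : V (x * g ^ (orderOf g / p) * x⁻¹) = 1 := by
      rw [map_mul, map_mul, map_pow, MonoidHom.mem_ker.1 hg]
      simp
    rw [hVS _ hsS, hϕ] at h1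
    have hTbot : T = ⊥ := by
      rw [← Subgroup.card_eq_one, hTcard, hk0, pow_zero]
    rw [hTbot, Subgroup.mem_bot, Subtype.ext_iff] at h1
    have h2 : g ^ (orderOf g / p) = 1 := conj_eq_one_iff.1 h1
    rw [h2, orderOf_one] at hs
    exact hp.one_lt.ne hs
  · have hrT : (⟨r, hrS⟩ : S) ∈ T := hTr.resolve_left hk0
    have hrN : r ∈ V.ker := by
      rw [MonoidHom.mem_ker, hVS r hrS, hϕ]
      exact hrT
    have hlt : Nat.card V.ker < n := by
      rw [← hn]
      refine lt_of_le_of_ne (Subgroup.card_le_card_group _) fun h => ?_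
      have htop := Subgroup.eq_top_of_card_eq _ h
      have : T = ⊤ := by
        rw [Subgroup.eq_top_iff']
        rintro ⟨s, hs⟩
        rw [← hϕ, ← hVS s hs, ← MonoidHom.mem_ker, htop]
        trivial
      rw [this, Subgroup.index_top] at hTidx
      exact hp.one_lt.ne hTidx
    obtain ⟨K, hK⟩ := ih _ hlt V.ker (H.subgroupOf V.ker) rfl
      (fun h => hrH (Subgroup.subgroupOf_eq_top.1 h hrN))
      (fun x hx => Subtype.ext (by
        simpa using hH x.1 fun h => hx (Subgroup.mem_subgroupOf.2 h)))
    refine ⟨K.map V.ker.subtype, fun g => ?_⟩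
    constructor
    · rintro ⟨x, hx, rfl⟩
      have := (hK x).1 hx
      rwa [← Subgroup.orderOf_coe] at this
    · intro hg
      refine ⟨⟨g, hVker g hg⟩, (hK _).2 ?_, rfl⟩
      rwa [Subgroup.orderOf_mk]

/-! ### Vanishing norms and coprime action -/

/-- If `r` normalizes `A` and the norms `∏_{j < p} (a r) ^ j • v` all vanish, then
`v ^ |A| = ∏_{a ∈ A} a • v`. Multiply the norms over `a ∈ A`: for `0 < j < p` the `j`-th factors
multiply to `∏_{a ∈ A} a r ^ j • v`, and these products combine to the inverse of
`∏_{a ∈ A} a • v`, because the norm of `v` under `r` also vanishes. -/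
theorem pow_card_eq_prod_smul {E V : Type*} [Group E] [CommGroup V] [MulDistribMulAction E V]
    {p : ℕ} (hp : p.Prime) (A : Subgroup E) [Fintype A] (r : E)
    (hr : ∀ a ∈ A, r * a * r⁻¹ ∈ A) (hpow : ∀ a ∈ A, (a * r) ^ p = 1)
    (hnorm : ∀ a ∈ A, ∀ v : V, ∏ j ∈ Finset.range p, (a * r) ^ j • v = 1) (v : V) :
    v ^ Fintype.card A = ∏ a : A, (a : E) • v := by
  have hrj : ∀ (j : ℕ), ∀ a ∈ A, r ^ j * a * (r ^ j)⁻¹ ∈ A := by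
    intro j
    induction j with
    | zero => intro a ha; simpa using ha
    | succ j ih =>
      intro a ha
      have := hr _ (ih a ha)
      rw [pow_succ']
      convert this using 1
      group
  have hc : ∀ (j : ℕ), ∀ a ∈ A, (a * r) ^ j * (r ^ j)⁻¹ ∈ A := by
    intro j
    induction j with
    | zero => intro a _; simp
    | succ j ih =>
      intro a ha
      have := A.mul_mem (ih a ha) (hrj j a ha)
      convert this using 1
      rw [pow_succ (a * r), pow_succ r]
      group
  -- `a ↦ (a r) ^ j` is a bijection from `A` to the coset `A r ^ j` when `0 < j < p`
  have hj : ∀ j ∈ Finset.range p, j ≠ 0 →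
      ∏ a : A, ((a : E) * r) ^ j • v = ∏ a : A, (a : E) • r ^ j • v := by
    intro j hjp hj0
    let f : A → A := fun a => ⟨((a : E) * r) ^ j * (r ^ j)⁻¹, hc j a a.2⟩
    have hinj : Function.Injective f := by
      intro a b hab
      have h1 : ((a : E) * r) ^ j = ((b : E) * r) ^ j :=
        mul_right_cancel (congrArg Subtype.val hab)
      have hcop : Nat.Coprime j p := by
        rw [Nat.coprime_comm, hp.coprime_iff_not_dvd]
        intro hd
        exact absurd (Nat.le_of_dvd (Nat.pos_of_ne_zero hj0) hd)
          (not_le.2 (Finset.mem_range.1 hjp))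
      obtain ⟨m, -, hm⟩ := Nat.exists_mul_mod_eq_one_of_coprime hcop hp.one_lt
      have hred : ∀ x : E, x ^ p = 1 → (x ^ j) ^ m = x := by
        intro x hx
        rw [← pow_mul, ← Nat.div_add_mod (j * m) p, hm, pow_add, pow_mul, hx, one_pow, one_mul,
          pow_one]
      have h2 : (a : E) * r = b * r := by
        rw [← hred _ (hpow a a.2), ← hred _ (hpow b b.2), h1]
      exact Subtype.ext (mul_right_cancel h2)
    refine Fintype.prod_bijective f (Finite.injective_iff_bijective.1 hinj) _ _ fun a => ?_
    simp only [f]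
    rw [smul_smul, inv_mul_cancel_right]
  have h1 : ∏ j ∈ Finset.range p, ∏ a : A, ((a : E) * r) ^ j • v = 1 := by
    rw [Finset.prod_comm]
    exact Finset.prod_eq_one fun a _ => hnorm a a.2 v
  have h2 : ∏ j ∈ Finset.range p, ∏ a : A, (a : E) • r ^ j • v = 1 := by
    rw [Finset.prod_comm]
    refine Finset.prod_eq_one fun a _ => ?_
    have := hnorm 1 A.one_mem v
    rw [← Finset.smul_prod', ← smul_one (a : E)]
    simpa using congrArg ((a : E) • ·) this
  have h0 : 0 ∈ Finset.range p := Finset.mem_range.2 hp.pos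
  rw [← Finset.mul_prod_erase _ _ h0] at h1 h2
  rw [Finset.prod_congr rfl fun j hj' => hj j (Finset.mem_of_mem_erase hj')
    (Finset.ne_of_mem_erase hj')] at h1
  have h3 := mul_right_cancel (h1.trans h2.symm)
  simpa [Finset.prod_const] using h3

/-- Under the norm hypotheses of `pow_card_eq_prod_smul`, `v ^ |A|` is fixed by `A`; if moreover
`|A|` is prime to `|V|`, every element of `V` is such a power, so `A` acts trivially. -/
theorem smul_eq_of_coprime {E V : Type*} [Group E] [CommGroup V] [Finite V]
    [MulDistribMulAction E V]
    {p : ℕ} (hp : p.Prime) (A : Subgroup E) [Finite A] (r : E)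
    (hr : ∀ a ∈ A, r * a * r⁻¹ ∈ A) (hpow : ∀ a ∈ A, (a * r) ^ p = 1)
    (hnorm : ∀ a ∈ A, ∀ v : V, ∏ j ∈ Finset.range p, (a * r) ^ j • v = 1)
    (hcop : (Nat.card V).Coprime (Nat.card A)) (a : E) (ha : a ∈ A) (v : V) : a • v = v := by
  classical
  have : Fintype A := Fintype.ofFinite A
  have h := pow_card_eq_prod_smul hp A r hr hpow hnorm v
  have hfix : a • v ^ Fintype.card A = v ^ Fintype.card A := by
    rw [h, Finset.smul_prod']
    refine Fintype.prod_bijective (fun b : A => (⟨a, ha⟩ * b : A))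
      (Group.mulLeft_bijective _) _ _ fun b => ?_
    rw [smul_smul]
    rfl
  rw [smul_pow', ← Nat.card_eq_fintype_card] at hfix
  exact (powCoprime hcop).injective hfix

/-- If conjugation by `s` sends `u` to `u * c` and fixes `c`, then conjugation by `s ^ n` sends `u`
to `u * c ^ n`. -/
theorem conj_pow_of_commutator_central {G : Type*} [Group G] (s u c : G)
    (h : s * u * s⁻¹ = u * c) (hc : s * c * s⁻¹ = c) (n : ℕ) :
    s ^ n * u * (s ^ n)⁻¹ = u * c ^ n := by
  induction n with
  | zero => simp
  | succ n ih =>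
    have h2 : s * (u * c ^ n) * s⁻¹ = (s * u * s⁻¹) * (s * c * s⁻¹) ^ n := by
      rw [conj_pow]; group
    rw [pow_succ' s]
    calc s * s ^ n * u * (s * s ^ n)⁻¹ = s * (s ^ n * u * (s ^ n)⁻¹) * s⁻¹ := by group
      _ = u * c ^ (n + 1) := by rw [ih, h2, h, hc, pow_succ']; group

open scoped IsMulCommutative in
/-- For `v` in an abelian normal subgroup, `(v g) ^ n` is the norm `∏_{j < n} g ^ j v g ^ (-j)`
times `g ^ n`. In particular that norm is trivial if `(v g) ^ n = g ^ n = 1`. -/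
theorem mul_pow_eq_prod_conj {G : Type*} [Group G] (Z : Subgroup G) [Z.Normal]
    [IsMulCommutative Z] (g : G) (v : Z) (n : ℕ) :
    ((v : G) * g) ^ n = ((∏ j ∈ Finset.range n, MulAut.conjNormal (g ^ j) v : Z) : G) * g ^ n := by
  induction n with
  | zero => simp
  | succ n ih =>
    rw [pow_succ, ih, Finset.prod_range_succ, Subgroup.coe_mul, MulAut.conjNormal_apply]
    group

open scoped IsMulCommutative in
/-- A subgroup `A ≤ H` normalized by some `r ∉ H` centralizes every abelian normal subgroup
`Z ≤ H` of coprime order: for `v ∈ Z` and `a ∈ A` both `a r` and `v a r` lie outside `H`, so the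
norm of `v` under `a r` is trivial. -/
theorem conj_eq_of_abelian_normal {G : Type*} [Group G] [Finite G] {p : ℕ} (hp : p.Prime)
    (H : Subgroup G) (hH : ∀ x, x ∉ H → x ^ p = 1) (Z : Subgroup G) [Z.Normal]
    [IsMulCommutative Z] (hZH : Z ≤ H) (A : Subgroup G) (hAH : A ≤ H)
    (hcop : (Nat.card Z).Coprime (Nat.card A)) (r : G) (hrH : r ∉ H)
    (hr : ∀ a ∈ A, r * a * r⁻¹ ∈ A) (a : G) (ha : a ∈ A) (c : G) (hc : c ∈ Z) :
    a * c * a⁻¹ = c := by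
  let _ : MulDistribMulAction G Z := MulDistribMulAction.compHom Z (MulAut.conjNormal (H := Z))
  have hsmul : ∀ (g : G) (v : Z), g • v = MulAut.conjNormal g v := fun _ _ => rfl
  have hout : ∀ b ∈ A, b * r ∉ H := fun b hb h => hrH ((H.mul_mem_cancel_left (hAH hb)).1 h)
  have h := smul_eq_of_coprime (V := Z) hp A r hr (fun b hb => hH _ (hout b hb))
    (fun b hb v => by
      have h1 := mul_pow_eq_prod_conj Z (b * r) v p
      rw [hH _ (hout b hb), mul_one, hH _ fun h =>
        hout b hb ((H.mul_mem_cancel_left (hZH v.2)).1 h)] at h1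
      exact (Subtype.ext h1).symm) hcop a ha ⟨c, hc⟩
  have := congrArg Subtype.val h
  rwa [hsmul, MulAut.conjNormal_apply] at this

/-- The same for a normal `q`-subgroup `Q`. By induction, `A` centralizes the image of `Q` modulo
`Z = Z(Q)`; it also centralizes `Z`, so for `a ∈ A`, `u ∈ Q` the commutator `c = u⁻¹ (a u a⁻¹)` is
fixed by `a`, whence `c ^ |a| = 1`. As the order of `c` is a power of `q`, `c = 1`. -/
theorem conj_eq_of_qgroup_normal {p q : ℕ} (hp : p.Prime) (hq : q.Prime) (hqp : q ≠ p) :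
    ∀ (n : ℕ) (G : Type*) [Group G] [Finite G] (H : Subgroup G) (Q : Subgroup G) [Q.Normal]
      (A : Subgroup G) (r : G), Nat.card G = n → (∀ x, x ∉ H → x ^ p = 1) → IsPGroup q Q →
      A ≤ H → q.Coprime (Nat.card A) → r ∉ H → (∀ a ∈ A, r * a * r⁻¹ ∈ A) →
      ∀ a ∈ A, ∀ u ∈ Q, a * u * a⁻¹ = u := by
  have := Fact.mk hp
  have := Fact.mk hq
  intro n
  induction n using Nat.strong_induction_on with
  | _ n ih =>
  intro G _ _ H Q _ A r hn hH hQ hAH hcop hrH hr a ha u hu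
  by_cases hQ1 : Q = ⊥
  · rw [hQ1, Subgroup.mem_bot] at hu
    simp [hu]
  have hQnt : Nontrivial Q := (Subgroup.nontrivial_iff_ne_bot Q).2 hQ1
  have hQH : Q ≤ H := by
    intro x hx
    by_contra hxH
    obtain ⟨k, hk⟩ := hQ ⟨x, hx⟩
    have hk' : x ^ q ^ k = 1 := congrArg Subtype.val hk
    have h1 : orderOf x ∣ Nat.gcd p (q ^ k) :=
      Nat.dvd_gcd (orderOf_dvd_of_pow_eq_one (hH x hxH)) (orderOf_dvd_of_pow_eq_one hk')
    rw [((Nat.coprime_primes hp hq).2 hqp.symm).pow_right k, Nat.dvd_one, orderOf_eq_one_iff] at h1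
    exact hxH (h1 ▸ H.one_mem)
  let Z : Subgroup G := (Subgroup.center Q).map Q.subtype
  have hZn : Z.Normal := ConjAct.normal_of_characteristic_of_normal
  have hZQ : Z ≤ Q := Subgroup.map_subtype_le _
  have hZcomm : IsMulCommutative Z := Subgroup.map_isMulCommutative _ _
  have hZbot : Z ≠ ⊥ := by
    have hnt := hQ.center_nontrivial
    intro h
    rw [Subgroup.map_eq_bot_iff_of_injective _ Q.subtype_injective] at h
    exact (Subgroup.nontrivial_iff_ne_bot _).1 hnt h
  have hcardQ : ∃ k, Nat.card Q = q ^ k := IsPGroup.iff_card.1 hQ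
  have hcopQ : (Nat.card Q).Coprime (Nat.card A) := by
    obtain ⟨k, hk⟩ := hcardQ
    rw [hk]; exact hcop.pow_left k
  have hZfix : ∀ c ∈ Z, a * c * a⁻¹ = c := fun c hc =>
    conj_eq_of_abelian_normal hp H hH Z (hZQ.trans hQH) A hAH
      (hcopQ.coprime_dvd_left (Subgroup.card_dvd_of_le hZQ)) r hrH hr a ha c hc
  have hlt : Nat.card (G ⧸ Z) < n := by
    rw [← hn, Subgroup.card_eq_card_quotient_mul_card_subgroup Z]
    have h1 : 1 < Nat.card Z := (Subgroup.one_lt_card_iff_ne_bot Z).2 hZbot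
    have h2 : 0 < Nat.card (G ⧸ Z) := Nat.card_pos
    nlinarith
  have hrH' : (r : G ⧸ Z) ∉ H.map (QuotientGroup.mk' Z) := by
    rintro ⟨x, hx, hxr⟩
    have h1 : x⁻¹ * r ∈ Z := QuotientGroup.eq.1 hxr
    exact hrH ((H.mul_mem_cancel_left (H.inv_mem hx)).1 (hQH (hZQ h1)))
  have hQn' : (Q.map (QuotientGroup.mk' Z)).Normal :=
    Subgroup.Normal.map ‹Q.Normal› _ (QuotientGroup.mk'_surjective Z)
  have hmod := ih _ hlt (G ⧸ Z) (H.map (QuotientGroup.mk' Z)) (Q.map (QuotientGroup.mk' Z))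
    (A.map (QuotientGroup.mk' Z)) (r : G ⧸ Z) rfl
    (by
      intro x
      induction x using QuotientGroup.induction_on with
      | H g =>
        intro hg
        rw [← QuotientGroup.mk_pow, hH g fun h => hg ⟨g, h, rfl⟩, QuotientGroup.mk_one])
    (hQ.map _) (Subgroup.map_mono hAH)
    (hcop.coprime_dvd_right (Subgroup.card_map_dvd A (QuotientGroup.mk' Z))) hrH'
    (by
      rintro _ ⟨b, hb, rfl⟩
      exact ⟨r * b * r⁻¹, hr b hb, by simp⟩)
    (a : G ⧸ Z) ⟨a, ha, rfl⟩ (u : G ⧸ Z) ⟨u, hu, rfl⟩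
  have hcZ : u⁻¹ * (a * u * a⁻¹) ∈ Z := by
    rw [← QuotientGroup.eq]
    rw [eq_comm]
    simpa using hmod
  set c := u⁻¹ * (a * u * a⁻¹) with hcdef
  have h1 := conj_pow_of_commutator_central a u c (by rw [hcdef]; group) (hZfix c hcZ) (orderOf a)
  rw [pow_orderOf_eq_one, one_mul, inv_one, mul_one, left_eq_mul] at h1
  have hoa : orderOf c ∣ Nat.card A :=
    (orderOf_dvd_of_pow_eq_one h1).trans (Subgroup.orderOf_dvd_natCard A ha)
  have hoQ : orderOf c ∣ Nat.card Q := Subgroup.orderOf_dvd_natCard Q (hZQ hcZ)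
  have hc1 : c = 1 := by
    rw [← orderOf_eq_one_iff]
    exact Nat.eq_one_of_dvd_coprimes hcopQ hoQ hoa
  rw [hcdef, inv_mul_eq_one] at hc1
  exact hc1.symm

/-- The `p`-elements of `H` commute with all elements of order prime to `p`. A Sylow `p`-subgroup
`S` containing `a` acts by conjugation on the normal `p`-complement `K`, and since the number of
Sylow `q`-subgroups of `K` is prime to `p`, it fixes one of them, `Q`. Inside the normalizer of `Q`,
`S ⊓ H` centralizes `Q`. Hence the index in `K` of the centralizer of `a` is prime to every `q`. -/
theorem conj_eq_of_prime_to {p : ℕ} (hp : p.Prime) {G : Type*} [Group G] [Finite G]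
    (H : Subgroup G) [H.Normal] (hHtop : H ≠ ⊤) (hH : ∀ x, x ∉ H → x ^ p = 1)
    (a : G) (haH : a ∈ H) (hap : ∃ k, a ^ p ^ k = 1) (y : G) (hy : ¬ p ∣ orderOf y) :
    a * y * a⁻¹ = y := by
  have := Fact.mk hp
  obtain ⟨K, hK⟩ := exists_subgroup_prime_to hp _ G H rfl hHtop hH
  have hKn : K.Normal := ⟨fun x hx g => by
    rw [hK] at hx ⊢
    rwa [← MulAut.conj_apply, MulEquiv.orderOf_eq]⟩
  have hpK : ¬ p ∣ Nat.card K := by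
    intro h
    obtain ⟨x, hx⟩ := exists_prime_orderOf_dvd_card' p h
    rw [← Subgroup.orderOf_coe] at hx
    exact (hK x).1 x.2 hx.symm.dvd
  -- a Sylow `p`-subgroup `S` containing `a`, and an element of `S` outside `H`
  have hza : IsPGroup p (Subgroup.zpowers a) := by
    obtain ⟨k, hk⟩ := hap
    obtain ⟨m, -, hm⟩ := (Nat.dvd_prime_pow hp).1 (orderOf_dvd_of_pow_eq_one hk)
    exact IsPGroup.of_card (n := m) (by rw [Nat.card_zpowers, hm])
  obtain ⟨S, hS⟩ := hza.exists_le_sylow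
  have haS : a ∈ S := hS (Subgroup.mem_zpowers a)
  obtain ⟨r, hrS, hrH⟩ : ∃ r, r ∈ S ∧ r ∉ H := by
    obtain ⟨r, hrH⟩ : ∃ r, r ∉ H := by
      by_contra! h
      exact hHtop ((Subgroup.eq_top_iff' H).2 h)
    have hr1 : r ≠ 1 := fun h => hrH (h ▸ H.one_mem)
    have hzr : IsPGroup p (Subgroup.zpowers r) := IsPGroup.of_card (n := 1) (by
      rw [Nat.card_zpowers, orderOf_eq_prime (hH r hrH) hr1, pow_one])
    obtain ⟨U, hU⟩ := hzr.exists_le_sylow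
    obtain ⟨x, hx⟩ := MulAction.exists_smul_eq G U S
    refine ⟨x * r * x⁻¹, ?_, fun h => hrH ?_⟩
    · rw [← hx, Sylow.smul_def, ← SetLike.mem_coe, ← Sylow.coe_coe, Sylow.pointwise_smul_def,
        SetLike.mem_coe, Subgroup.mem_pointwise_smul_iff_inv_smul_mem, ← map_inv, MulAut.smul_def,
        MulAut.conj_apply]
      have := hU (Subgroup.mem_zpowers _)
      simpa [mul_assoc] using this
    · have := ‹H.Normal›.conj_mem _ h x⁻¹
      simpa [mul_assoc] using this
  have hSp : IsPGroup p (S : Subgroup G) := S.isPGroup'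
  let A : Subgroup G := (S : Subgroup G) ⊓ H
  -- the centralizer of `a` in `K` contains a Sylow `q`-subgroup of `K` for every prime `q`
  let C : Subgroup K := (Subgroup.centralizer {a}).subgroupOf K
  suffices hC : C = ⊤ by
    have hyK : y ∈ K := (hK y).2 hy
    have h1 : (⟨y, hyK⟩ : K) ∈ C := hC ▸ Subgroup.mem_top _
    have h2 : y ∈ Subgroup.centralizer {a} := h1
    rw [Subgroup.mem_centralizer_singleton_iff] at h2
    rw [mul_inv_eq_iff_eq_mul]
    first | exact h2 | exact h2.symm
  rw [← Subgroup.index_eq_one, Nat.eq_one_iff_not_exists_prime_dvd]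
  intro q hq hdvd
  have := Fact.mk hq
  have hqK : q ∣ Nat.card K := hdvd.trans C.index_dvd_card
  have hqp : q ≠ p := fun h => hpK (h ▸ hqK)
  let _ : MulDistribMulAction (S : Subgroup G) K := MulDistribMulAction.compHom K
    ((MulAut.conjNormal (H := K)).comp (S : Subgroup G).subtype)
  have hpSyl : ¬ p ∣ Nat.card (Sylow q K) := by
    intro h
    let Q₀ : Sylow q K := default
    exact hpK ((h.trans Q₀.card_dvd_index).trans (Q₀ : Subgroup K).index_dvd_card)
  obtain ⟨Q, hQ⟩ := hSp.nonempty_fixed_point_of_prime_not_dvd_card (Sylow q K) hpSyl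
  have hQS : ∀ s (hs : s ∈ S), ∀ x ∈ Q, MulAut.conjNormal s x ∈ Q := by
    intro s hs x hx
    have h1 : (⟨s, hs⟩ : (S : Subgroup G)) • Q = Q := hQ ⟨s, hs⟩
    have h2 : (⟨s, hs⟩ : (S : Subgroup G)) • x ∈ (⟨s, hs⟩ : (S : Subgroup G)) • (Q : Subgroup K) :=
      Subgroup.smul_mem_pointwise_smul _ _ _ hx
    rw [← Sylow.pointwise_smul_def, h1] at h2
    exact h2
  let Q' : Subgroup G := (Q : Subgroup K).map K.subtype
  have hQ'conj : ∀ s ∈ S, ∀ x ∈ Q', s * x * s⁻¹ ∈ Q' := by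
    rintro s hs _ ⟨x, hx, rfl⟩
    exact ⟨_, hQS s hs x hx, by simp⟩
  let L : Subgroup G := Subgroup.normalizer (Q' : Set G)
  have hSL : ∀ s ∈ S, s ∈ L := by
    intro s hs
    rw [Subgroup.mem_normalizer_iff]
    intro x
    refine ⟨hQ'conj s hs x, fun h => ?_⟩
    have := hQ'conj s⁻¹ (S.inv_mem hs) _ h
    simpa [mul_assoc] using this
  have hQL : Q' ≤ L := Subgroup.le_normalizer
  have hQ'q : IsPGroup q Q' := Q.isPGroup'.map K.subtype
  have hAq : q.Coprime (Nat.card (A.subgroupOf L)) := by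
    obtain ⟨m, hm⟩ := IsPGroup.iff_card.1
      ((hSp.to_le (inf_le_left : A ≤ S)).comap_subtype (K := L))
    have hm' : Nat.card (A.subgroupOf L) = p ^ m := hm
    rw [hm']
    exact ((Nat.coprime_primes hq hp).2 hqp).pow_right m
  have hfix : ∀ u ∈ Q', a * u * a⁻¹ = u := by
    intro u hu
    have hn : (Q'.subgroupOf L).Normal := Subgroup.normal_in_normalizer
    have := conj_eq_of_qgroup_normal hp hq hqp _ L (H.subgroupOf L) (Q'.subgroupOf L)
      (A.subgroupOf L) ⟨r, hSL r hrS⟩ rfl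
      (fun x hx => Subtype.ext (by
        simpa using hH x.1 fun h => hx (Subgroup.mem_subgroupOf.2 h)))
      (hQ'q.comap_subtype (K := L))
      (fun x hx => Subgroup.mem_subgroupOf.2 (Subgroup.mem_subgroupOf.1 hx).2) hAq
      (fun h => hrH (Subgroup.mem_subgroupOf.1 h))
      (fun b hb => Subgroup.mem_subgroupOf.2
        ⟨S.mul_mem (S.mul_mem hrS (Subgroup.mem_subgroupOf.1 hb).1) (S.inv_mem hrS),
          ‹H.Normal›.conj_mem _ (Subgroup.mem_subgroupOf.1 hb).2 r⟩)
      ⟨a, hSL a haS⟩ (Subgroup.mem_subgroupOf.2 ⟨haS, haH⟩) ⟨u, hQL hu⟩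
      (Subgroup.mem_subgroupOf.2 hu)
    exact congrArg Subtype.val this
  have hQC : (Q : Subgroup K) ≤ C := by
    intro x hx
    rw [Subgroup.mem_subgroupOf, Subgroup.mem_centralizer_singleton_iff]
    have := mul_inv_eq_iff_eq_mul.1 (hfix x ⟨x, hx, rfl⟩)
    first | exact this | exact this.symm
  exact Q.not_dvd_index (hdvd.trans (Subgroup.index_dvd_of_le hQC))

/-! ### Partitions -/

theorem mem_of_pow_mem_of_coprime_s18 {G : Type*} [Group G] (X : Subgroup G) (x : G) {m n : ℕ}
    (hmn : m.Coprime n) (hm : x ^ m ∈ X) (hn : x ^ n ∈ X) : x ∈ X := by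
  have h : x = (x ^ m) ^ (m.gcdA n) * (x ^ n) ^ (m.gcdB n) := by
    rw [← zpow_natCast, ← zpow_natCast x n, ← zpow_mul, ← zpow_mul, ← zpow_add,
      ← Nat.gcd_eq_gcd_ab, hmn]
    simp
  rw [h]
  exact X.mul_mem (X.zpow_mem hm _) (X.zpow_mem hn _)

/-- Some normal subgroup `M` of index `p` contains `H_p(G)`, since `G / H_p(G)` is a nontrivial
group of exponent `p`. -/
theorem exists_normal_index_eq {p : ℕ} (hp : p.Prime) {G : Type*} [Group G] [Finite G]
    (hHp : Subgroup.closure {x : G | x ^ p ≠ 1} ≠ ⊤) :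
    ∃ M : Subgroup G, M.Normal ∧ M.index = p ∧ Subgroup.closure {x : G | x ^ p ≠ 1} ≤ M := by
  have := Fact.mk hp
  set N := Subgroup.closure {x : G | x ^ p ≠ 1} with hNdef
  have hN : N.Normal := by
    have : N = Subgroup.normalClosure {x : G | x ^ p ≠ 1} := by
      rw [hNdef, Subgroup.normalClosure]
      congr 1
      refine Set.Subset.antisymm Group.subset_conjugatesOfSet fun x hx => ?_
      obtain ⟨a, ha, hax⟩ := Group.mem_conjugatesOfSet_iff.1 hx
      obtain ⟨c, rfl⟩ := isConj_iff.1 hax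
      rw [Set.mem_ofPred_eq, conj_pow, Ne, conj_eq_one_iff]
      exact ha
    rw [this]
    exact Subgroup.normalClosure_normal
  have hpg : IsPGroup p (G ⧸ N) := by
    intro x
    induction x using QuotientGroup.induction_on with
    | H g =>
      refine ⟨1, ?_⟩
      rw [pow_one, ← QuotientGroup.mk_pow, QuotientGroup.eq_one_iff]
      by_cases hg : g ^ p = 1
      · rw [hg]; exact N.one_mem
      · exact N.pow_mem (Subgroup.subset_closure hg) p
  obtain ⟨k, hk⟩ := IsPGroup.iff_card.1 hpg
  cases k with
  | zero => exact absurd (Subgroup.index_eq_one.1 hk) hHp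
  | succ k =>
    obtain ⟨T, hT, -⟩ := Sylow.exists_subgroup_card_pow_prime_le (G := G ⧸ N) p (n := 0)
      (m := k) (hk ▸ pow_dvd_pow p (by omega)) ⊥ (by simp) (by omega)
    have hTidx : T.index = p := by
      have h := T.card_mul_index
      rw [hT, hk, pow_succ] at h
      exact Nat.eq_of_mul_eq_mul_left (pow_pos hp.pos k) h
    have hTn : T.Normal := by
      apply Subgroup.normal_of_index_eq_minFac_card
      rw [hTidx, hk, hp.pow_minFac (by omega)]
    refine ⟨T.comap (QuotientGroup.mk' N), inferInstance, ?_, ?_⟩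
    · rw [Subgroup.index_comap_of_surjective _ (QuotientGroup.mk'_surjective N), hTidx]
    · intro x hx
      rw [Subgroup.mem_comap, QuotientGroup.mk'_apply, (QuotientGroup.eq_one_iff x).2 hx]
      exact T.one_mem

/-- When `M` is normal of prime index and `g ∉ M`, the powers of `g` meet every coset of `M`. -/
theorem exists_mul_zpow_eq {p : ℕ} (hp : p.Prime) {G : Type*} [Group G] (M : Subgroup G)
    [M.Normal] (hM : M.index = p) (g : G) (hg : g ∉ M) (x : G) :
    ∃ m ∈ M, ∃ j : ℤ, x = m * g ^ j := by
  have := Fact.mk hp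
  have h1 : (g : G ⧸ M) ≠ 1 := fun h => hg ((QuotientGroup.eq_one_iff g).1 h)
  obtain ⟨j, hj⟩ := mem_zpowers_of_prime_card (G := G ⧸ M) hM (g' := (x : G ⧸ M)) h1
  refine ⟨x * (g ^ j)⁻¹, ?_, j, by group⟩
  have hj' : ((g ^ j : G) : G ⧸ M) = x := hj
  rw [← QuotientGroup.eq_one_iff, QuotientGroup.mk_mul, QuotientGroup.mk_inv, hj', mul_inv_cancel]

/-- If `p` does not divide `|M|`, any subgroup of order `p` outside `M` is a Frobenius
complement. -/
theorem frobenius_of_not_dvd {p : ℕ} (hp : p.Prime) {G : Type*} [Group G] [Finite G]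
    (hnp : ¬ IsPGroup p G) (M : Subgroup G) [M.Normal] (hM : M.index = p)
    (hout : ∀ x, x ∉ M → x ^ p = 1) (hdvd : ¬ p ∣ Nat.card M) :
    ∃ H : Subgroup G, H ≠ ⊥ ∧ H ≠ ⊤ ∧
      ∀ g : G, g ∉ H → ∀ x ∈ H, g * x * g⁻¹ ∈ H → x = 1 := by
  have := Fact.mk hp
  obtain ⟨r, hr⟩ : ∃ r, r ∉ M := by
    by_contra! h
    rw [(Subgroup.eq_top_iff' M).2 h, Subgroup.index_top] at hM
    exact hp.one_lt.ne hM
  have hr1 : r ≠ 1 := fun h => hr (h ▸ M.one_mem)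
  have hor : orderOf r = p := orderOf_eq_prime (hout r hr) hr1
  have hcard : Nat.card (Subgroup.zpowers r) = p := by rw [Nat.card_zpowers, hor]
  have hinf : ∀ x ∈ Subgroup.zpowers r, x ∈ M → x = 1 := by
    intro x hx hxM
    rw [← orderOf_eq_one_iff]
    have h1 : orderOf x ∣ p := hcard ▸ Subgroup.orderOf_dvd_natCard _ hx
    have h2 : orderOf x ∣ Nat.card M := Subgroup.orderOf_dvd_natCard _ hxM
    rcases (Nat.dvd_prime hp).1 h1 with h | h
    · exact h
    · exact absurd (h ▸ h2) hdvd
  refine ⟨Subgroup.zpowers r, by simpa using hr1, fun h => hnp ?_, ?_⟩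
  · refine IsPGroup.of_card (n := 1) ?_
    rw [pow_one, ← hcard, h, Subgroup.card_top]
  · intro x hx w hw hxw
    by_contra hw1
    have hwM : w ∉ M := fun h => hw1 (hinf w hw h)
    have hcyc : IsCyclic (G ⧸ M) := isCyclic_of_prime_card hM
    let _ : CommGroup (G ⧸ M) := IsCyclic.commGroup
    -- modulo `M` conjugation is trivial, so `x` centralizes `w`
    have hmod : x * w * x⁻¹ * w⁻¹ ∈ M := by
      rw [← QuotientGroup.eq_one_iff]
      have : ((x * w * x⁻¹ * w⁻¹ : G) : G ⧸ M) =
          QuotientGroup.mk' M x * QuotientGroup.mk' M w * (QuotientGroup.mk' M x)⁻¹ *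
            (QuotientGroup.mk' M w)⁻¹ := rfl
      rw [this, mul_comm (QuotientGroup.mk' M x), mul_inv_cancel_right, mul_inv_cancel]
    have hcomm : x * w * x⁻¹ * w⁻¹ = 1 :=
      hinf _ (mul_mem hxw (inv_mem hw)) hmod
    obtain ⟨m, hm, j, rfl⟩ := exists_mul_zpow_eq hp M hM w hwM x
    have hmw : Commute m w := by
      rw [commute_iff_eq]
      have h1 : m * w ^ j * w = w * (m * w ^ j) :=
        mul_inv_eq_iff_eq_mul.1 (mul_inv_eq_one.1 hcomm)
      have h2 : m * w * w ^ j = w * m * w ^ j := by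
        rw [mul_assoc m w, (Commute.self_zpow w j).eq, ← mul_assoc, h1, mul_assoc]
      exact mul_right_cancel h2
    have h3 : (m * w) ^ p = 1 := hout _ fun h => hwM ((M.mul_mem_cancel_left hm).1 h)
    rw [hmw.mul_pow, hout w hwM, mul_one] at h3
    have hm1 : m = 1 := by
      rw [← orderOf_eq_one_iff]
      rcases (Nat.dvd_prime hp).1 (orderOf_dvd_of_pow_eq_one h3) with h | h
      · exact h
      · exact absurd (h ▸ Subgroup.orderOf_dvd_natCard M hm) hdvd
    exact hx (by rw [hm1, one_mul]; exact Subgroup.zpow_mem _ hw j)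

/-- `p`-elements of `M` commute with `p'`-elements, which forces all of `M` into one component. -/
theorem mem_of_isPartitionOf {p : ℕ} (hp : p.Prime) {G : Type*} [Group G] [Finite G]
    (M : Subgroup G) [M.Normal] (hM : M.index = p) (hout : ∀ x, x ∉ M → x ^ p = 1)
    (hdvd : p ∣ Nat.card M) (y : G) (hy1 : y ≠ 1) (hyp : ¬ p ∣ orderOf y)
    (P : Finset (Subgroup G)) (hP : IsPartitionOf P) : M ∈ P := by
  have := Fact.mk hp
  have hMtop : M ≠ ⊤ := fun h => by
    rw [h, Subgroup.index_top] at hM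
    exact hp.one_lt.ne hM
  obtain ⟨⟨hproper, hcov⟩, hdisj⟩ := hP
  have huniq : ∀ X ∈ P, ∀ Y ∈ P, ∀ g, g ≠ 1 → g ∈ X → g ∈ Y → X = Y := by
    intro X hX Y hY g hg hgX hgY
    by_contra hne
    have : g ∈ X ⊓ Y := ⟨hgX, hgY⟩
    rw [hdisj X hX Y hY hne, Subgroup.mem_bot] at this
    exact hg this
  have key : ∀ a ∈ M, a ≠ 1 → (∃ k, a ^ p ^ k = 1) → ∀ b, b ≠ 1 → ¬ p ∣ orderOf b →
      ∃ X ∈ P, a ∈ X ∧ b ∈ X := by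
    intro a haM _ ha b _ hb
    obtain ⟨X, hX, habX⟩ := hcov (a * b)
    have hab : Commute a b :=
      mul_inv_eq_iff_eq_mul.1 (conj_eq_of_prime_to hp M hMtop hout a haM ha b hb)
    obtain ⟨k, hk⟩ := ha
    have hcop : (p ^ k).Coprime (orderOf b) := ((hp.coprime_iff_not_dvd).2 hb).pow_left k
    refine ⟨X, hX, ?_, ?_⟩
    · refine mem_of_pow_mem_of_coprime_s18 X a hcop (by rw [hk]; exact X.one_mem) ?_
      have := X.pow_mem habX (orderOf b)
      rwa [hab.mul_pow, pow_orderOf_eq_one, mul_one] at this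
    · refine mem_of_pow_mem_of_coprime_s18 X b hcop ?_ (by rw [pow_orderOf_eq_one]; exact X.one_mem)
      have := X.pow_mem habX (p ^ k)
      rwa [hab.mul_pow, hk, one_mul] at this
  obtain ⟨⟨z, hzM⟩, hz⟩ := exists_prime_orderOf_dvd_card' p hdvd
  rw [Subgroup.orderOf_mk] at hz
  have hz1 : z ≠ 1 := fun h => by
    rw [h, orderOf_one] at hz
    exact hp.one_lt.ne hz
  have hzp : ∃ k, z ^ p ^ k = 1 := ⟨1, by rw [pow_one, ← hz, pow_orderOf_eq_one]⟩
  obtain ⟨Y, hY, hzY, hyY⟩ := key z hzM hz1 hzp y hy1 hyp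
  have hp' : ∀ b, ¬ p ∣ orderOf b → b ∈ Y := by
    intro b hb
    by_cases hb1 : b = 1
    · rw [hb1]; exact Y.one_mem
    obtain ⟨X, hX, hzX, hbX⟩ := key z hzM hz1 hzp b hb1 hb
    rwa [huniq Y hY X hX z hz1 hzY hzX]
  have hpel : ∀ a ∈ M, (∃ k, a ^ p ^ k = 1) → a ∈ Y := by
    intro a haM ha
    by_cases ha1 : a = 1
    · rw [ha1]; exact Y.one_mem
    obtain ⟨X, hX, haX, hyX⟩ := key a haM ha1 ha y hy1 hyp
    rwa [huniq Y hY X hX y hy1 hyY hyX]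
  have hle : M ≤ Y := by
    intro m hm
    obtain ⟨k, n, hn, hmn⟩ := Nat.exists_eq_pow_mul_and_not_dvd (orderOf_pos m).ne' p hp.ne_one
    have hcop : (p ^ k).Coprime n := ((hp.coprime_iff_not_dvd).2 hn).pow_left k
    refine mem_of_pow_mem_of_coprime_s18 Y m hcop (hp' _ fun h => hn (h.trans ?_))
      (hpel _ (M.pow_mem hm n) ⟨k, ?_⟩)
    · apply orderOf_dvd_of_pow_eq_one
      rw [← pow_mul, ← hmn, pow_orderOf_eq_one]
    · rw [← pow_mul, mul_comm, ← hmn, pow_orderOf_eq_one]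
  have hYM : M = Y := by
    refine le_antisymm hle ?_
    have h1 : M.relIndex Y * Y.index = p := by rw [← hM]; exact Subgroup.relIndex_mul_index hle
    rcases (Nat.dvd_prime hp).1 (Dvd.intro_left _ h1) with h | h
    · exact absurd (Subgroup.index_eq_one.1 h) (hproper Y hY)
    · rw [h] at h1
      exact Subgroup.relIndex_eq_one.1 (Nat.eq_of_mul_eq_mul_right hp.pos (h1.trans (one_mul p).symm))
  rw [hYM]; exact hY

/-- The components other than `M` embed in `G / M`, so each covers at most `p - 1` of the
`(p - 1) |M|` elements outside `M`. -/
theorem card_lower_bound {p : ℕ} (hp : p.Prime) {G : Type*} [Group G] [Finite G]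
    (M : Subgroup G) [M.Normal] (hM : M.index = p) (P : Finset (Subgroup G))
    (hP : IsPartitionOf P) (hMP : M ∈ P) : Nat.card M + 1 ≤ P.card := by
  classical
  have := Fintype.ofFinite G
  obtain ⟨⟨-, hcov⟩, hdisj⟩ := hP
  have hcardK : ∀ K ∈ P.erase M, (Finset.univ.filter fun g : G => g ∈ K ∧ g ≠ 1).card ≤ p - 1 := by
    intro K hK
    have hKM : K ⊓ M = ⊥ := hdisj K (Finset.mem_of_mem_erase hK) M hMP (Finset.ne_of_mem_erase hK)
    have h1 : Nat.card K ≤ p := by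
      rw [← hM]
      refine Nat.card_le_card_of_injective (fun k : K => ((k : G) : G ⧸ M)) fun a b hab => ?_
      have h2 : (a : G)⁻¹ * b ∈ K ⊓ M := ⟨K.mul_mem (K.inv_mem a.2) b.2, QuotientGroup.eq.1 hab⟩
      rw [hKM, Subgroup.mem_bot, inv_mul_eq_one] at h2
      exact Subtype.ext h2
    have h2 : (Finset.univ.filter fun g : G => g ∈ K).card = Nat.card K := by
      rw [Nat.card_eq_fintype_card, Fintype.card_subtype]
    have h3 : (Finset.univ.filter fun g : G => g ∈ K ∧ g ≠ 1) =
        (Finset.univ.filter fun g : G => g ∈ K).erase 1 := by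
      ext g; simp [and_comm]
    rw [h3, Finset.card_erase_of_mem (by simp), h2]
    omega
  have hsub : (Finset.univ.filter fun g : G => g ∉ M) ⊆
      (P.erase M).biUnion fun K => Finset.univ.filter fun g : G => g ∈ K ∧ g ≠ 1 := by
    intro g hg
    have hgM : g ∉ M := by simpa using hg
    obtain ⟨K, hK, hgK⟩ := hcov g
    simp only [Finset.mem_biUnion, Finset.mem_filter, Finset.mem_univ, true_and]
    exact ⟨K, Finset.mem_erase.2 ⟨fun h => hgM (h ▸ hgK), hK⟩, hgK, fun h => hgM (h ▸ M.one_mem)⟩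
  have hle := (Finset.card_le_card hsub).trans (Finset.card_biUnion_le_card_mul _ _ _ hcardK)
  have hcount : (Finset.univ.filter fun g : G => g ∉ M).card = Nat.card M * (p - 1) := by
    have h1 := Finset.card_filter_add_card_filter_not (s := (Finset.univ : Finset G))
      (fun g : G => g ∈ M)
    have h2 : (Finset.univ.filter fun g : G => g ∈ M).card = Nat.card M := by
      rw [Nat.card_eq_fintype_card, Fintype.card_subtype]
    have h3 : (Finset.univ : Finset G).card = Nat.card M * p := by
      rw [Finset.card_univ, ← Nat.card_eq_fintype_card, ← hM, M.card_mul_index]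
    rw [Nat.mul_sub_one]
    omega
  rw [hcount, Finset.card_erase_of_mem hMP] at hle
  have h1 := Nat.le_of_mul_le_mul_right hle (Nat.sub_pos_of_lt hp.one_lt)
  have h2 : 0 < P.card := Finset.card_pos.2 ⟨M, hMP⟩
  omega

/-- The partition consisting of `M` and the subgroups of order `p` outside `M`. The latter are the
`⟨m r⟩` for `m ∈ M` and a fixed `r ∉ M`, since every element outside `M` has a power in `M r`. -/
theorem exists_partition_card_le {p : ℕ} (hp : p.Prime) {G : Type*} [Group G] [Finite G]
    (hnp : ¬ IsPGroup p G)
    (M : Subgroup G) [M.Normal] (hM : M.index = p) (hout : ∀ x, x ∉ M → x ^ p = 1) :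
    ∃ P : Finset (Subgroup G), IsPartitionOf P ∧ P.card ≤ Nat.card M + 1 := by
  classical
  have := Fact.mk hp
  have := Fintype.ofFinite G
  have hMtop : M ≠ ⊤ := fun h => by
    rw [h, Subgroup.index_top] at hM
    exact hp.one_lt.ne hM
  obtain ⟨r, hr⟩ : ∃ r, r ∉ M := by
    by_contra! h
    exact hMtop ((Subgroup.eq_top_iff' M).2 h)
  have hmr : ∀ m : M, (m : G) * r ∉ M := fun m h => hr ((M.mul_mem_cancel_left m.2).1 h)
  have hcard : ∀ g, g ∉ M → Nat.card (Subgroup.zpowers g) = p := fun g hg => by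
    rw [Nat.card_zpowers, orderOf_eq_prime (hout g hg) fun h => hg (h ▸ M.one_mem)]
  -- a nontrivial element of a subgroup of order `p` generates it
  have hgen : ∀ g, g ∉ M → ∀ x ∈ Subgroup.zpowers g, x ≠ 1 →
      Subgroup.zpowers x = Subgroup.zpowers g := by
    intro g hg x hx hx1
    refine Subgroup.eq_of_le_of_card_ge ((Subgroup.zpowers_le).2 hx) ?_
    rw [hcard g hg, Nat.card_zpowers]
    have h1 : orderOf x ∣ p := hcard g hg ▸ Subgroup.orderOf_dvd_natCard _ hx
    rcases (Nat.dvd_prime hp).1 h1 with h | h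
    · exact absurd (orderOf_eq_one_iff.1 h) hx1
    · exact h.ge
  have hMinf : ∀ g, g ∉ M → M ⊓ Subgroup.zpowers g = ⊥ := by
    intro g hg
    rw [eq_bot_iff]
    rintro x ⟨hxM, hxg⟩
    rw [Subgroup.mem_bot]
    by_contra hx1
    have h : g ∈ Subgroup.zpowers x := by
      rw [hgen g hg x hxg hx1]; exact Subgroup.mem_zpowers g
    exact hg ((Subgroup.zpowers_le.2 hxM) h)
  let R : Finset (Subgroup G) := Finset.univ.image fun m : M => Subgroup.zpowers ((m : G) * r)
  refine ⟨insert M R, ⟨⟨?_, ?_⟩, ?_⟩, ?_⟩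
  · intro K hK
    rcases Finset.mem_insert.1 hK with rfl | hK
    · exact hMtop
    · obtain ⟨m, -, rfl⟩ := Finset.mem_image.1 hK
      intro h
      refine hnp (IsPGroup.of_card (n := 1) ?_)
      rw [pow_one, ← hcard _ (hmr m), h, Subgroup.card_top]
  · intro g
    by_cases hg : g ∈ M
    · exact ⟨M, Finset.mem_insert_self _ _, hg⟩
    · obtain ⟨m, hm, j, hj⟩ := exists_mul_zpow_eq hp M hM g hg r
      have hgj : g ^ j = ((⟨m⁻¹, M.inv_mem hm⟩ : M) : G) * r := by
        rw [hj]; simp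
      refine ⟨_, Finset.mem_insert_of_mem
        (Finset.mem_image.2 ⟨⟨m⁻¹, M.inv_mem hm⟩, Finset.mem_univ _, rfl⟩), ?_⟩
      rw [← hgj, hgen g hg (g ^ j) ⟨j, rfl⟩ fun h => hmr ⟨m⁻¹, M.inv_mem hm⟩ (by
        rw [← hgj, h]; exact M.one_mem)]
      exact Subgroup.mem_zpowers g
  · intro H hH K hK hne
    rcases Finset.mem_insert.1 hH with rfl | hH <;> rcases Finset.mem_insert.1 hK with rfl | hK
    · exact absurd rfl hne
    · obtain ⟨m, -, rfl⟩ := Finset.mem_image.1 hK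
      exact hMinf _ (hmr m)
    · obtain ⟨m, -, rfl⟩ := Finset.mem_image.1 hH
      rw [inf_comm]
      exact hMinf _ (hmr m)
    · obtain ⟨m, -, rfl⟩ := Finset.mem_image.1 hH
      obtain ⟨n, -, rfl⟩ := Finset.mem_image.1 hK
      rw [eq_bot_iff]
      rintro x ⟨hx1, hx2⟩
      rw [Subgroup.mem_bot]
      by_contra hx
      exact hne ((hgen _ (hmr m) x hx1 hx).symm.trans (hgen _ (hmr n) x hx2 hx))
  · refine (Finset.card_insert_le _ _).trans (Nat.add_le_add_right ?_ 1)
    refine Finset.card_image_le.trans ?_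
    rw [Finset.card_univ, Nat.card_eq_fintype_card]

theorem hughes_thompson_rho (p : ℕ) (hp : p.Prime) (G : Type*) [Group G] [Finite G]
    (hnp : ¬ IsPGroup p G)
    (hHp : Subgroup.closure {x : G | x ^ p ≠ 1} ≠ ⊤)
    (hnf : ¬ ∃ H : Subgroup G, H ≠ ⊥ ∧ H ≠ ⊤ ∧
      ∀ g : G, g ∉ H → ∀ x ∈ H, g * x * g⁻¹ ∈ H → x = 1) :
    (∀ P : Finset (Subgroup G), IsPartitionOf P →
        Subgroup.closure {x : G | x ^ p ≠ 1} ∈ P) ∧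
      rhoG G = Nat.card (Subgroup.closure {x : G | x ^ p ≠ 1}) + 1 := by
  have := Fact.mk hp
  obtain ⟨M, hMn, hM, hle⟩ := exists_normal_index_eq hp hHp
  have hMtop : M ≠ ⊤ := fun h => by
    rw [h, Subgroup.index_top] at hM
    exact hp.one_lt.ne hM
  have hout : ∀ x, x ∉ M → x ^ p = 1 := by
    intro x hx
    by_contra h
    exact hx (hle (Subgroup.subset_closure h))
  -- a nontrivial element of order prime to `p`
  obtain ⟨y, hy1, hyd⟩ : ∃ y : G, y ≠ 1 ∧ ¬ p ∣ orderOf y := by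
    by_contra! h
    refine hnp (IsPGroup.of_card (Nat.eq_prime_pow_of_unique_prime_dvd Nat.card_pos.ne' ?_))
    intro q hq hdvd
    have := Fact.mk hq
    obtain ⟨y, hy⟩ := exists_prime_orderOf_dvd_card' q hdvd
    have hy1 : y ≠ 1 := fun h => by
      rw [h, orderOf_one] at hy
      exact hq.one_lt.ne hy
    have := h y hy1
    rw [hy] at this
    exact ((Nat.prime_dvd_prime_iff_eq hp hq).1 this).symm
  have hyp : y ^ p ≠ 1 := fun h => by
    rcases (Nat.dvd_prime hp).1 (orderOf_dvd_of_pow_eq_one h) with h | h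
    · exact hy1 (orderOf_eq_one_iff.1 h)
    · exact hyd h.symm.dvd
  -- an element `m` of `M` with `m ^ p = 1` is `(m y) y⁻¹`, a quotient of two generators
  have hMeq : Subgroup.closure {x : G | x ^ p ≠ 1} = M := by
    refine le_antisymm hle fun m hm => ?_
    by_cases hmp : m ^ p = 1
    · have hc : Commute m y := mul_inv_eq_iff_eq_mul.1
        (conj_eq_of_prime_to hp M hMtop hout m hm ⟨1, by rwa [pow_one]⟩ y hyd)
      have h1 : m * y ∈ Subgroup.closure {x : G | x ^ p ≠ 1} := by
        apply Subgroup.subset_closure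
        rw [Set.mem_ofPred_eq, hc.mul_pow, hmp, one_mul]
        exact hyp
      exact (Subgroup.mul_mem_cancel_right _ (Subgroup.subset_closure hyp)).1 h1
    · exact Subgroup.subset_closure hmp
  have hdvd : p ∣ Nat.card M := by
    by_contra h
    exact hnf (frobenius_of_not_dvd hp hnp M hM hout h)
  rw [hMeq]
  have hmem : ∀ P : Finset (Subgroup G), IsPartitionOf P → M ∈ P :=
    fun P hP => mem_of_isPartitionOf hp M hM hout hdvd y hy1 hyd P hP
  refine ⟨hmem, ?_⟩
  obtain ⟨P, hP, hPc⟩ := exists_partition_card_le hp hnp M hM hout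
  have hlow := fun Q hQ => card_lower_bound hp M hM Q hQ (hmem Q hQ)
  refine le_antisymm (Nat.sInf_le ⟨P, hP, le_antisymm hPc (hlow P hP)⟩) ?_
  refine le_csInf ⟨_, P, hP, rfl⟩ ?_
  rintro _ ⟨Q, hQ, rfl⟩
  exact hlow Q hQ
end
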